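/- Let ℓ ∈ ℕ and σ < 1/2 be fixed reals with ℓ ≥ 1. Then ∫_0^T |ζ^{(ℓ)}(σ + it)|² dt ∼ (2π)^{2σ−1} · (ζ(2−2σ)/(2−2σ)) · T^{2−2σ} · (log(T/2π))^{2ℓ} as T → ∞. Consequently, for any fixed β ∈ [0,1) and large T, max_{T^β ≤ t ≤ T} |ζ^{(ℓ)}(σ+it)| ≥ (1+o(1)) (2π)^{σ−1/2} √(ζ(2−2σ)/(2−2σ)) · T^{1/2−σ} (log T)^ℓ. -/

import Mathlib

open Filter

/-!
Write `z = x - i t` with `x = 1 - σ > 1 / 2`, and use the functional equation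
`ζ(1 - z) = χ(1 - z) ζ(z)`. With `L = log(t / 2π)`, the growth of `χ(1 - w)` on a fixed disc around
`z` is that of `exp(L (w - z))`. Hence Cauchy's estimates bound the derivatives of
`exp(-L (w - z)) ζ(1 - w)` at `z` by averages of `ζ` over circles, and Leibniz' formula gives the
`l`-th derivative of `ζ(1 - w)` at `z` as `L^l ζ(1 - z)` up to an error smaller by a factor `L` in
mean square. Since `|χ(1 - z)|² ∼ (t / 2π)^(2x - 1)`, Abel summation reduces the second moment to
the mean square of `ζ` on `re z = x`. This is `ζ(2x)`, because there `ζ` is approximated in mean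
square by the partial sums of its Dirichlet series.
The lower bound for the maximum follows since the part of the second moment below height `T^β` is
negligible.
-/

section

open Complex Set MeasureTheory Topology Asymptotics

/-! ### The zeta function on `0 < re s` -/

/-- The Dirichlet polynomial `∑_{n ≤ N} n^{-s}`, a partial sum of the zeta series. -/
noncomputable def zetaPartialSum (N : ℕ) (s : ℂ) : ℂ :=
  ∑ n ∈ Finset.range N, 1 / ((n : ℂ) + 1) ^ s

/-- The integral `∫_N^∞ {u} u^{-s-1} du`, the non-elementary part of the remainder
`ζ(s) - ∑_{n ≤ N} n^{-s}`. -/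
noncomputable def fractTail (N : ℕ) (s : ℂ) : ℂ :=
  ∫ u in Ioi (N : ℝ), (u : ℂ) ^ (-s - 1) * (Int.fract u : ℝ)

lemma norm_fract_le_one (u : ℝ) : ‖((Int.fract u : ℝ) : ℂ)‖ ≤ 1 := by
  rw [norm_real, Real.norm_of_nonneg (Int.fract_nonneg u)]
  exact (Int.fract_lt_one u).le

lemma integrableOn_cpow_mul_fract {a : ℝ} (ha : 0 < a) {s : ℂ} (hs : 0 < s.re) :
    IntegrableOn (fun u : ℝ => (u : ℂ) ^ (-s - 1) * (Int.fract u : ℝ)) (Ioi a) := by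
  refine (integrableOn_Ioi_cpow_of_lt (a := -s - 1) (by simp; linarith) ha).mul_bdd (c := 1) ?_
    (ae_of_all _ norm_fract_le_one)
  exact (measurable_ofReal.comp measurable_fract).aestronglyMeasurable

lemma fractTail_eq_mellin (N : ℕ) (s : ℂ) :
    fractTail N s = mellin (indicator (Ioi (N : ℝ)) fun u => ((Int.fract u : ℝ) : ℂ)) (-s) := by
  have hsub : Ioi (0 : ℝ) ∩ Ioi (N : ℝ) = Ioi (N : ℝ) :=
    inter_eq_right.2 (Ioi_subset_Ioi N.cast_nonneg)
  have hmul (u : ℝ) : (u : ℂ) ^ (-s - 1) •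
      (Ioi (N : ℝ)).indicator (fun u => ((Int.fract u : ℝ) : ℂ)) u =
        (Ioi (N : ℝ)).indicator (fun u => (u : ℂ) ^ (-s - 1) * (Int.fract u : ℝ)) u :=
    (indicator_smul_apply _ (fun u : ℝ => (u : ℂ) ^ (-s - 1)) _ u).symm
  simp_rw [fractTail, mellin, hmul, setIntegral_indicator measurableSet_Ioi, hsub]

lemma differentiableAt_fractTail {N : ℕ} (hN : 1 ≤ N) {s : ℂ} (hs : 0 < s.re) :
    DifferentiableAt ℂ (fractTail N) s := by
  set f : ℝ → ℂ := indicator (Ioi (N : ℝ)) fun u => ((Int.fract u : ℝ) : ℂ)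
  have hf_le (u : ℝ) : ‖f u‖ ≤ 1 := (norm_indicator_le_norm_self _ u).trans (norm_fract_le_one u)
  have hf_loc : LocallyIntegrableOn f (Ioi 0) := by
    refine ((locallyIntegrable_const (1 : ℝ)).mono ?_ (ae_of_all _ fun u => by
      simpa using hf_le u)).locallyIntegrableOn _
    exact ((measurable_ofReal.comp measurable_fract).indicator
      measurableSet_Ioi).aestronglyMeasurable
  have hf_top : f =O[atTop] fun x : ℝ => x ^ (-(0 : ℝ)) :=
    Asymptotics.IsBigO.of_bound 1 (Eventually.of_forall fun u => by simpa using hf_le u)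
  have hf_bot : f =O[𝓝[>] 0] fun x : ℝ => x ^ (-(-s.re - 1)) := by
    refine EventuallyEq.trans_isBigO ?_ (Asymptotics.isBigO_zero _ _)
    filter_upwards [nhdsWithin_le_nhds (Iic_mem_nhds (by exact_mod_cast hN : (0 : ℝ) < N))]
      with u hu
    exact indicator_of_notMem (not_lt.2 hu) _
  have hmellin : DifferentiableAt ℂ (mellin f) (-s) :=
    mellin_differentiableAt_of_isBigO_rpow hf_loc hf_top (by simpa using hs) hf_bot (by simp)
  rw [funext (fractTail_eq_mellin N)]
  exact hmellin.comp s differentiableAt_id.neg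

/-- Abel summation, applied to the zeta series with its first `N` terms deleted. -/
lemma riemannZeta_sub_zetaPartialSum {N : ℕ} {s : ℂ} (hs : 1 < s.re) :
    riemannZeta s - zetaPartialSum N s =
      s * ∫ u in Ioi (1 : ℝ), ((⌊u⌋₊ - N : ℕ) : ℂ) * (u : ℂ) ^ (-(s + 1)) := by
  set f : ℕ → ℂ := fun n => if N < n then 1 else 0 with hf
  have hsum (n : ℕ) : ∑ k ∈ Finset.Icc 1 n, f k = ((n - N : ℕ) : ℂ) := by
    rw [hf, Finset.sum_boole, ← Nat.card_Ioc]
    congr 2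
    ext k
    simp only [Finset.mem_filter, Finset.mem_Icc, Finset.mem_Ioc]
    omega
  have hnorm (k : ℕ) : ‖f k‖ ≤ 1 := by
    simp only [hf]
    split_ifs <;> simp
  have hO : (fun n => ∑ k ∈ Finset.Icc 1 n, ‖f k‖) =O[atTop] fun n : ℕ => (n : ℝ) ^ (1 : ℝ) :=
    Asymptotics.IsBigO.of_bound 1 <| Eventually.of_forall fun n => by
      simpa [abs_of_nonneg (Finset.sum_nonneg fun k _ => norm_nonneg (f k))] using
        Finset.sum_le_card_nsmul (Finset.Icc 1 n) (fun k => ‖f k‖) 1 fun k _ => hnorm k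
  have hzeta : Summable fun n : ℕ => 1 / ((n : ℂ) + 1) ^ s := by
    simpa using (summable_nat_add_iff 1).2 (Complex.summable_one_div_nat_cpow.2 hs)
  have hLSeries : riemannZeta s - zetaPartialSum N s = LSeries f s := by
    have hf_summable : LSeriesSummable f s := LSeriesSummable_of_sum_norm_bigO hO zero_le_one hs
    have hterm_zero : ∑ n ∈ Finset.range (N + 1), LSeries.term f s n = 0 :=
      Finset.sum_eq_zero fun n hn => by
        have : ¬ N < n := by simpa [Nat.lt_succ_iff] using hn
        simp [LSeries.term, hf, this]
    rw [zeta_eq_tsum_one_div_nat_add_one_cpow hs, ← hzeta.sum_add_tsum_nat_add N, zetaPartialSum,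
      add_sub_cancel_left, LSeries, ← hf_summable.sum_add_tsum_nat_add (N + 1), hterm_zero,
      zero_add]
    refine tsum_congr fun n => ?_
    simp only [LSeries.term_of_ne_zero (by omega : n + (N + 1) ≠ 0), hf,
      if_pos (by omega : N < n + (N + 1))]
    push_cast
    ring_nf
  rw [hLSeries, LSeries_eq_mul_integral' f zero_le_one hs hO]
  simp_rw [hsum]

lemma setIntegral_floor_sub_mul_cpow {N : ℕ} (hN : 1 ≤ N) (s : ℂ) :
    ∫ u in Ioi (1 : ℝ), ((⌊u⌋₊ - N : ℕ) : ℂ) * (u : ℂ) ^ (-(s + 1)) =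
      ∫ u in Ioi (N : ℝ), ((u : ℂ) ^ (-s) - N * (u : ℂ) ^ (-s - 1)) -
        (u : ℂ) ^ (-s - 1) * (Int.fract u : ℝ) := by
  rw [setIntegral_eq_of_subset_of_forall_sdiff_eq_zero (s := Ioi (N : ℝ)) measurableSet_Ioi
    (Ioi_subset_Ioi (by exact_mod_cast hN : (1 : ℝ) ≤ N)) fun u hu => ?_]
  · refine setIntegral_congr_fun measurableSet_Ioi fun u (hu : (N : ℝ) < u) => ?_
    have hu_pos : 0 < u := N.cast_nonneg.trans_lt hu
    have hu_ne : (u : ℂ) ≠ 0 := by exact_mod_cast hu_pos.ne'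
    have hfloor : ((⌊u⌋₊ - N : ℕ) : ℂ) = u - N - (Int.fract u : ℝ) := by
      rw [Nat.cast_sub (Nat.le_floor hu.le), Int.fract, ← natCast_floor_eq_intCast_floor hu_pos.le]
      push_cast
      ring
    have hpow : (u : ℂ) ^ (-s) = u * (u : ℂ) ^ (-s - 1) := by
      rw [cpow_sub _ _ hu_ne, cpow_one]
      field_simp
    simp only [hfloor, hpow, neg_add']
    ring
  · have hu_le : ⌊u⌋₊ ≤ N := Nat.floor_le_of_le (not_lt.1 hu.2)
    simp [Nat.sub_eq_zero_of_le hu_le]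

lemma riemannZeta_eq_of_one_lt_re {N : ℕ} (hN : 1 ≤ N) {s : ℂ} (hs : 1 < s.re) :
    riemannZeta s = zetaPartialSum N s + (N : ℂ) ^ (1 - s) / (s - 1) - s * fractTail N s := by
  have hN_pos : (0 : ℝ) < N := by exact_mod_cast hN
  have hN_ne : (N : ℂ) ≠ 0 := by exact_mod_cast hN_pos.ne'
  have hs_ne : s ≠ 0 := by rintro rfl; norm_num at hs
  have hs_one : s - 1 ≠ 0 := sub_ne_zero.2 (by rintro rfl; norm_num at hs)
  have hre : (-s).re < -1 := by simpa using hs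
  have hre' : (-s - 1).re < -1 := by simp; linarith
  have hint := integrableOn_Ioi_cpow_of_lt hre hN_pos
  have hint' := (integrableOn_Ioi_cpow_of_lt hre' hN_pos).const_mul (N : ℂ)
  have hint_sub : IntegrableOn (fun u : ℝ => (u : ℂ) ^ (-s) - N * (u : ℂ) ^ (-s - 1))
      (Ioi (N : ℝ)) := hint.sub hint'
  have hNpow : (N : ℂ) ^ (1 - s) = N * (N : ℂ) ^ (-s) := by
    rw [sub_eq_add_neg, cpow_add _ _ hN_ne, cpow_one]
  rw [add_sub_assoc, ← sub_eq_iff_eq_add', riemannZeta_sub_zetaPartialSum hs,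
    setIntegral_floor_sub_mul_cpow hN,
    integral_sub hint_sub (integrableOn_cpow_mul_fract hN_pos (by linarith)),
    integral_sub hint hint', integral_const_mul, integral_Ioi_cpow_of_lt hre hN_pos,
    integral_Ioi_cpow_of_lt hre' hN_pos, ← fractTail, show -s + 1 = 1 - s by ring,
    show -s - 1 + 1 = -s by ring, ofReal_natCast, hNpow, show (1 - s) = -(s - 1) by ring]
  field_simp
  ring

/-- The first step of Euler–Maclaurin summation, continued analytically from `1 < re s`. -/
lemma riemannZeta_eq_of_re_pos {N : ℕ} (hN : 1 ≤ N) {s : ℂ} (hs : 0 < s.re) (hs_one : s ≠ 1) :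
    riemannZeta s = zetaPartialSum N s + (N : ℂ) ^ (1 - s) / (s - 1) - s * fractTail N s := by
  set U : Set ℂ := {s | 0 < s.re}
  have hU : IsOpen U := isOpen_lt continuous_const continuous_re
  have hN_ne : (N : ℂ) ≠ 0 := by exact_mod_cast (by omega : N ≠ 0)
  set R : ℂ → ℂ := fun s =>
    (s - 1) * zetaPartialSum N s + (N : ℂ) ^ (1 - s) - (s - 1) * (s * fractTail N s) with hR
  have hR_diff : DifferentiableOn ℂ R U := fun z hz => by
    have htail := differentiableAt_fractTail hN hz
    have hsum : DifferentiableAt ℂ (zetaPartialSum N) z := by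
      unfold zetaPartialSum
      refine DifferentiableAt.fun_sum fun n _ => ?_
      have hn : (n : ℂ) + 1 ≠ 0 := by exact_mod_cast n.succ_ne_zero
      exact (differentiableAt_const _).div (differentiableAt_id.const_cpow (.inl hn))
        (by simp [cpow_eq_zero_iff, hn])
    have hpole : DifferentiableAt ℂ (fun s => (N : ℂ) ^ (1 - s)) z :=
      DifferentiableAt.const_cpow (by fun_prop) (.inl hN_ne)
    exact (by fun_prop : DifferentiableAt ℂ R z).differentiableWithinAt
  have hR_of_ne {z : ℂ} (hz : z ≠ 1) : R z = (z - 1) *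
      (zetaPartialSum N z + (N : ℂ) ^ (1 - z) / (z - 1) - z * fractTail N z) := by
    have := sub_ne_zero.2 hz
    simp only [hR]
    field_simp
  have heq : EqOn riemannZeta₁ R U := by
    refine AnalyticOnNhd.eqOn_of_preconnected_of_eventuallyEq (z₀ := 2)
      (differentiable_riemannZeta₁.differentiableOn.analyticOnNhd hU) (hR_diff.analyticOnNhd hU)
      (convex_halfSpace_re_gt 0).isPreconnected (by simp [U]) ?_
    filter_upwards [(isOpen_lt continuous_const continuous_re).mem_nhds
      (by simp : (1 : ℝ) < (2 : ℂ).re)] with z (hz : 1 < z.re)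
    have hz_one : z ≠ 1 := by rintro rfl; norm_num at hz
    rw [hR_of_ne hz_one, ← riemannZeta_eq_of_one_lt_re hN hz, riemannZeta_eq_inv_sub_mul hz_one,
      mul_inv_cancel_left₀ (sub_ne_zero.2 hz_one)]
  rw [riemannZeta_eq_inv_sub_mul hs_one, heq hs, hR_of_ne hs_one,
    inv_mul_cancel_left₀ (sub_ne_zero.2 hs_one)]

/-! ### Mean squares of oscillatory integrals -/

/-- The modulus of the Fourier transform of the Gaussian `exp (-b t ^ 2)` at frequency `l`. -/
noncomputable def gaussianKernel (b l : ℝ) : ℝ :=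
  (Real.pi / b) ^ (1 / 2 : ℝ) * Real.exp (-l ^ 2 / (4 * b))

lemma gaussianKernel_nonneg {b : ℝ} (hb : 0 < b) (l : ℝ) : 0 ≤ gaussianKernel b l := by
  have := Real.pi_pos
  unfold gaussianKernel
  positivity

lemma gaussianKernel_neg (b l : ℝ) : gaussianKernel b (-l) = gaussianKernel b l := by
  simp [gaussianKernel]

lemma continuous_gaussianKernel (b : ℝ) : Continuous (gaussianKernel b) := by
  unfold gaussianKernel
  fun_prop

lemma norm_integral_gaussian_mul_cexp {b : ℝ} (hb : 0 < b) (l : ℝ) :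
    ‖∫ t : ℝ, ((Real.exp (-b * t ^ 2) : ℝ) : ℂ) * cexp (I * l * t)‖ = gaussianKernel b l := by
  have hcomm (t : ℝ) : ((Real.exp (-b * t ^ 2) : ℝ) : ℂ) * cexp (I * l * t) =
      cexp (I * l * t) * cexp (-(b : ℂ) * (t : ℂ) ^ 2) := by
    rw [mul_comm]
    push_cast
    rfl
  simp_rw [hcomm, fourierIntegral_gaussian (b := (b : ℂ)) (by simpa using hb) (l : ℂ)]
  rw [norm_mul, Complex.norm_exp,
    show (Real.pi : ℂ) / b = ((Real.pi / b : ℝ) : ℂ) by push_cast; rfl,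
    norm_cpow_eq_rpow_re_of_pos (div_pos Real.pi_pos hb),
    show -(l : ℂ) ^ 2 / (4 * b) = ((-l ^ 2 / (4 * b) : ℝ) : ℂ) by push_cast; rfl, ofReal_re,
    gaussianKernel]
  norm_num

lemma norm_cexp_I_mul_mul (x y : ℝ) : ‖cexp (I * x * y)‖ = 1 := by
  rw [show I * (x : ℂ) * y = ((x * y : ℝ) : ℂ) * I by push_cast; ring, norm_exp_ofReal_mul_I]

section Oscillatory

variable {α : Type*} [MeasurableSpace α] {μ : Measure α} {g : α → ℂ} {φ : α → ℝ}

lemma norm_integral_prod_le_of_schur [SFinite μ] {f : α → ℝ} {K : α × α → ℝ} {H : α × α → ℂ}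
    {S : ℝ} (hf : AEStronglyMeasurable f μ) (hf_sq : Integrable (fun v => f v ^ 2) μ)
    (hK_meas : Measurable K) (hK_nonneg : ∀ p, 0 ≤ K p) (hK_symm : ∀ p : α × α, K p.swap = K p)
    (hK_int : ∀ᵐ v ∂μ, Integrable (fun w => K (v, w)) μ)
    (hK_le : ∀ᵐ v ∂μ, ∫ w, K (v, w) ∂μ ≤ S)
    (hH : ∀ p, ‖H p‖ ≤ f p.1 * f p.2 * K p) :
    ‖∫ p, H p ∂(μ.prod μ)‖ ≤ S * ∫ v, f v ^ 2 ∂μ := by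
  set F : α × α → ℝ := fun p => f p.1 ^ 2 * K p with hF
  have hF_meas : AEStronglyMeasurable F (μ.prod μ) :=
    (hf.comp_fst.pow 2).mul hK_meas.aestronglyMeasurable
  have hF_slice : ∀ᵐ v ∂μ, ∫ w, F (v, w) ∂μ ≤ f v ^ 2 * S := by
    filter_upwards [hK_le] with v hv
    simp only [hF]
    rw [integral_const_mul]
    exact mul_le_mul_of_nonneg_left hv (sq_nonneg _)
  have hF_nonneg (p : α × α) : 0 ≤ F p := mul_nonneg (sq_nonneg _) (hK_nonneg p)
  have hF_int : Integrable F (μ.prod μ) := by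
    rw [integrable_prod_iff hF_meas]
    refine ⟨hK_int.mono fun v hv => hv.const_mul (f v ^ 2),
      (hf_sq.mul_const S).mono' hF_meas.norm.integral_prod_right' ?_⟩
    filter_upwards [hF_slice] with v hv
    rw [Real.norm_of_nonneg (integral_nonneg fun w => norm_nonneg _)]
    simpa only [Real.norm_of_nonneg (hF_nonneg _)] using hv
  have hF_le : ∫ p, F p ∂(μ.prod μ) ≤ S * ∫ v, f v ^ 2 ∂μ := by
    rw [integral_prod _ hF_int, mul_comm, ← integral_mul_const]
    exact integral_mono_ae hF_int.integral_prod_left (hf_sq.mul_const S) hF_slice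
  have hF_swap : Integrable (fun p : α × α => F p.swap) (μ.prod μ) := hF_int.swap
  calc ‖∫ p, H p ∂(μ.prod μ)‖ ≤ ∫ p, (1 / 2) * (F p + F p.swap) ∂(μ.prod μ) := by
        refine norm_integral_le_of_norm_le ((hF_int.add hF_swap).const_mul _)
          (ae_of_all _ fun p => (hH p).trans ?_)
        simp only [hF, hK_symm, Prod.fst_swap]
        nlinarith [mul_nonneg (hK_nonneg p) (sq_nonneg (f p.1 - f p.2))]
    _ = ∫ p, F p ∂(μ.prod μ) := by
        rw [integral_const_mul, integral_add hF_int hF_swap, integral_prod_swap]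
        ring
    _ ≤ S * ∫ v, f v ^ 2 ∂μ := hF_le

/-- The oscillatory integral `∫ g(v) exp(i t φ(v)) dμ(v)`: a Fourier transform when `φ` is linear
and `μ` is Lebesgue measure, an exponential polynomial when `μ` is a counting measure. -/
noncomputable def oscIntegral (μ : Measure α) (g : α → ℂ) (φ : α → ℝ) (t : ℝ) : ℂ :=
  ∫ v, g v * cexp (I * t * φ v) ∂μ

lemma norm_oscIntegral_le (hg : Integrable g μ) (t : ℝ) :
    ‖oscIntegral μ g φ t‖ ≤ ∫ v, ‖g v‖ ∂μ :=
  norm_integral_le_of_norm_le hg.norm <| ae_of_all _ fun v => by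
    rw [norm_mul, norm_cexp_I_mul_mul, mul_one]

lemma continuous_oscIntegral (hg : Integrable g μ) (hφ : Measurable φ) :
    Continuous (oscIntegral μ g φ) := by
  refine continuous_of_dominated (bound := fun v => ‖g v‖) (fun t => ?_) (fun t => ?_) hg.norm ?_
  · exact hg.aestronglyMeasurable.mul (by fun_prop : Measurable _).aestronglyMeasurable
  · exact ae_of_all _ fun v => by rw [norm_mul, norm_cexp_I_mul_mul, mul_one]
  · exact ae_of_all _ fun v => by fun_prop

lemma ofReal_norm_oscIntegral_sq [SFinite μ] (t : ℝ) :
    ((‖oscIntegral μ g φ t‖ ^ 2 : ℝ) : ℂ) =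
      ∫ p, g p.1 * (starRingEnd ℂ) (g p.2) * cexp (I * (φ p.1 - φ p.2 : ℝ) * t) ∂(μ.prod μ) := by
  rw [← Complex.normSq_eq_norm_sq, ← Complex.mul_conj, oscIntegral, ← integral_conj,
    ← integral_prod_mul]
  congr 1 with p
  rw [map_mul, ← exp_conj, mul_mul_mul_comm, ← Complex.exp_add]
  simp only [map_mul, conj_I, conj_ofReal]
  push_cast
  ring_nf

lemma ofReal_integral_gaussian_mul_norm_oscIntegral_sq [SFinite μ] (hg : Integrable g μ)
    (hφ : Measurable φ) {b : ℝ} (hb : 0 < b) :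
    ((∫ t : ℝ, Real.exp (-b * t ^ 2) * ‖oscIntegral μ g φ t‖ ^ 2 : ℝ) : ℂ) =
      ∫ p, g p.1 * (starRingEnd ℂ) (g p.2) *
        (∫ t : ℝ, ((Real.exp (-b * t ^ 2) : ℝ) : ℂ) * cexp (I * (φ p.1 - φ p.2 : ℝ) * t))
          ∂(μ.prod μ) := by
  have hg_conj : Integrable (fun v => (starRingEnd ℂ) (g v)) μ :=
    (integrable_norm_iff (continuous_conj.comp_aestronglyMeasurable hg.aestronglyMeasurable)).1
      (by simpa using hg.norm)
  have hgauss : Integrable fun t : ℝ => ((Real.exp (-b * t ^ 2) : ℝ) : ℂ) :=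
    (integrable_exp_neg_mul_sq hb).ofReal
  have hint : Integrable (fun q : ℝ × (α × α) => ((Real.exp (-b * q.1 ^ 2) : ℝ) : ℂ) *
      (g q.2.1 * (starRingEnd ℂ) (g q.2.2)) * cexp (I * (φ q.2.1 - φ q.2.2 : ℝ) * q.1))
      (volume.prod (μ.prod μ)) := by
    refine (hgauss.mul_prod (hg.mul_prod hg_conj)).mul_bdd (c := 1) ?_
      (ae_of_all _ fun q => (norm_cexp_I_mul_mul _ _).le)
    exact (by fun_prop : Measurable _).aestronglyMeasurable
  calc _ = ∫ t : ℝ, ∫ p, ((Real.exp (-b * t ^ 2) : ℝ) : ℂ) *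
          (g p.1 * (starRingEnd ℂ) (g p.2)) * cexp (I * (φ p.1 - φ p.2 : ℝ) * t) ∂(μ.prod μ) := by
        rw [← integral_complex_ofReal]
        simp_rw [ofReal_mul, ofReal_norm_oscIntegral_sq, ← integral_const_mul, mul_assoc]
    _ = _ := by
        rw [integral_integral_swap hint]
        simp_rw [← integral_const_mul]
        congr! 4
        ring

lemma integral_gaussian_mul_norm_oscIntegral_sq_le [SFinite μ] (hg : Integrable g μ)
    (hg_sq : Integrable (fun v => ‖g v‖ ^ 2) μ) (hφ : Measurable φ) {b S : ℝ} (hb : 0 < b)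
    (hK_int : ∀ᵐ v ∂μ, Integrable (fun w => gaussianKernel b (φ v - φ w)) μ)
    (hK_le : ∀ᵐ v ∂μ, ∫ w, gaussianKernel b (φ v - φ w) ∂μ ≤ S) :
    ∫ t : ℝ, Real.exp (-b * t ^ 2) * ‖oscIntegral μ g φ t‖ ^ 2 ≤ S * ∫ v, ‖g v‖ ^ 2 ∂μ := by
  refine (le_abs_self _).trans ?_
  rw [← Real.norm_eq_abs, ← Complex.norm_real,
    ofReal_integral_gaussian_mul_norm_oscIntegral_sq hg hφ hb]
  refine norm_integral_prod_le_of_schur (K := fun p => gaussianKernel b (φ p.1 - φ p.2))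
    hg.norm.aestronglyMeasurable hg_sq ((continuous_gaussianKernel b).measurable.comp (by fun_prop))
    (fun p => gaussianKernel_nonneg hb _) (fun p => ?_) hK_int hK_le fun p => ?_
  · rw [← gaussianKernel_neg, Prod.fst_swap, Prod.snd_swap, neg_sub]
  · rw [norm_mul, norm_mul, RCLike.norm_conj, norm_integral_gaussian_mul_cexp hb]

/-- The Gaussian weight `exp (-(t / T) ^ 2)` is at least `1 / e` on `[-T, T]`. -/
lemma setIntegral_norm_oscIntegral_sq_le [SFinite μ] (hg : Integrable g μ)
    (hg_sq : Integrable (fun v => ‖g v‖ ^ 2) μ) (hφ : Measurable φ) {T S : ℝ} (hT : 0 < T)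
    (hK_int : ∀ᵐ v ∂μ, Integrable (fun w => gaussianKernel (T ^ 2)⁻¹ (φ v - φ w)) μ)
    (hK_le : ∀ᵐ v ∂μ, ∫ w, gaussianKernel (T ^ 2)⁻¹ (φ v - φ w) ∂μ ≤ S) :
    ∫ t in Icc (-T) T, ‖oscIntegral μ g φ t‖ ^ 2 ≤
      Real.exp 1 * (S * ∫ v, ‖g v‖ ^ 2 ∂μ) := by
  have hb : 0 < (T ^ 2)⁻¹ := by positivity
  have hint : Integrable fun t : ℝ =>
      Real.exp (-(T ^ 2)⁻¹ * t ^ 2) * ‖oscIntegral μ g φ t‖ ^ 2 := by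
    refine (integrable_exp_neg_mul_sq hb).mul_bdd (c := (∫ v, ‖g v‖ ∂μ) ^ 2)
      ((continuous_oscIntegral hg hφ).norm.pow 2).aestronglyMeasurable (ae_of_all _ fun t => ?_)
    rw [norm_pow, norm_norm]
    exact pow_le_pow_left₀ (norm_nonneg _) (norm_oscIntegral_le hg t) 2
  have hweight {t : ℝ} (ht : t ∈ Icc (-T) T) :
      1 ≤ Real.exp 1 * Real.exp (-(T ^ 2)⁻¹ * t ^ 2) := by
    rw [← Real.exp_add]
    refine Real.one_le_exp ?_
    have : (T ^ 2)⁻¹ * t ^ 2 ≤ 1 := by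
      rw [inv_mul_le_one₀ (by positivity)]
      exact sq_le_sq' ht.1 ht.2
    linarith
  calc ∫ t in Icc (-T) T, ‖oscIntegral μ g φ t‖ ^ 2
      ≤ ∫ t in Icc (-T) T, Real.exp 1 *
          (Real.exp (-(T ^ 2)⁻¹ * t ^ 2) * ‖oscIntegral μ g φ t‖ ^ 2) := by
        refine setIntegral_mono_on ((continuous_oscIntegral hg hφ).norm.pow 2).integrableOn_Icc
          (hint.const_mul _).integrableOn measurableSet_Icc fun t ht => ?_
        rw [← mul_assoc]
        exact le_mul_of_one_le_left (sq_nonneg _) (hweight ht)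
    _ ≤ Real.exp 1 * ∫ t : ℝ, Real.exp (-(T ^ 2)⁻¹ * t ^ 2) * ‖oscIntegral μ g φ t‖ ^ 2 := by
        rw [integral_const_mul]
        exact mul_le_mul_of_nonneg_left (setIntegral_le_integral hint (ae_of_all _ fun t =>
          mul_nonneg (Real.exp_pos _).le (sq_nonneg _))) (Real.exp_pos 1).le
    _ ≤ _ := by
        gcongr
        exact integral_gaussian_mul_norm_oscIntegral_sq_le hg hg_sq hφ hb hK_int hK_le

end Oscillatory

lemma integrable_gaussianKernel {b : ℝ} (hb : 0 < b) : Integrable (gaussianKernel b) := by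
  refine ((integrable_exp_neg_mul_sq (b := (4 * b)⁻¹) (by positivity)).const_mul
    ((Real.pi / b) ^ (1 / 2 : ℝ))).congr (ae_of_all _ fun l => ?_)
  simp only [gaussianKernel]
  congr 2
  field_simp

lemma integral_gaussianKernel {b : ℝ} (hb : 0 < b) : ∫ l, gaussianKernel b l = 2 * Real.pi := by
  have hform (l : ℝ) : gaussianKernel b l =
      (Real.pi / b) ^ (1 / 2 : ℝ) * Real.exp (-(4 * b)⁻¹ * l ^ 2) := by
    unfold gaussianKernel
    congr 2
    field_simp
  have := Real.pi_pos
  simp_rw [hform]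
  rw [integral_const_mul, integral_gaussian, ← Real.sqrt_eq_rpow, ← Real.sqrt_mul (by positivity),
    show Real.pi / b * (Real.pi / (4 * b)⁻¹) = (2 * Real.pi) ^ 2 by field_simp; ring,
    Real.sqrt_sq (by positivity)]

lemma setIntegral_norm_fourier_sq_le {g : ℝ → ℂ} (hg : Integrable g)
    (hg_sq : Integrable fun v => ‖g v‖ ^ 2) {T : ℝ} (hT : 0 < T) :
    ∫ t in Icc (-T) T, ‖oscIntegral volume g Neg.neg t‖ ^ 2 ≤
      Real.exp 1 * (2 * Real.pi * ∫ v, ‖g v‖ ^ 2) := by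
  have hb : 0 < (T ^ 2)⁻¹ := by positivity
  have hshift (v w : ℝ) :
      gaussianKernel (T ^ 2)⁻¹ (-v - -w) = gaussianKernel (T ^ 2)⁻¹ (w - v) := by
    ring_nf
  refine setIntegral_norm_oscIntegral_sq_le hg hg_sq measurable_neg hT (ae_of_all _ fun v => ?_)
    (ae_of_all _ fun v => ?_)
  · simpa only [hshift] using (integrable_gaussianKernel hb).comp_sub_right v
  · simp_rw [hshift]
    rw [integral_sub_right_eq_self (gaussianKernel _) v, integral_gaussianKernel hb]

/-! ### Mean-square bounds for the terms of the approximation to zeta -/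

/-- The function whose Fourier transform is `fractTail N` on the line `re s = x`: the integrand of
`fractTail` in logarithmic coordinates. -/
noncomputable def fractTailDensity (N : ℕ) (x u : ℝ) : ℂ :=
  (Real.exp (x * u) : ℝ) *
    indicator (Ioi (N : ℝ)) (fun u => ((Int.fract u : ℝ) : ℂ)) (Real.exp (-u))

lemma fractTail_eq_oscIntegral (N : ℕ) (x t : ℝ) :
    fractTail N (x - t * I) = oscIntegral volume (fractTailDensity N x) Neg.neg t := by
  have hpi : (Real.pi : ℂ) ≠ 0 := by exact_mod_cast Real.pi_pos.ne'
  rw [fractTail_eq_mellin, mellin_eq_fourier, Real.fourier_eq', oscIntegral]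
  congr 1 with v
  rw [smul_eq_mul, real_smul, mul_comm, fractTailDensity]
  congr 1
  · simp
  · rw [show (-((x : ℂ) - t * I)).im = t by simp, RCLike.inner_apply, conj_trivial]
    congr 1
    push_cast
    field_simp

lemma norm_fractTailDensity_le {N : ℕ} (hN : 1 ≤ N) (x u : ℝ) :
    ‖fractTailDensity N x u‖ ≤ indicator (Iic (-Real.log N)) (fun u => Real.exp (x * u)) u := by
  rw [fractTailDensity, norm_mul, norm_real, Real.norm_of_nonneg (Real.exp_pos _).le]
  by_cases hu : u ≤ -Real.log N
  · rw [indicator_of_mem (mem_Iic.2 hu)]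
    exact mul_le_of_le_one_right (Real.exp_pos _).le
      ((norm_indicator_le_norm_self _ _).trans (norm_fract_le_one _))
  · have hexp : Real.exp (-u) ∉ Ioi (N : ℝ) := by
      rw [mem_Ioi, not_lt, ← Real.le_log_iff_exp_le (by exact_mod_cast hN)]
      linarith
    rw [indicator_of_notMem hexp, norm_zero, mul_zero]
    exact indicator_nonneg (fun u _ => (Real.exp_pos _).le) u

lemma measurable_fractTailDensity (N : ℕ) (x : ℝ) : Measurable (fractTailDensity N x) := by
  have : Measurable (indicator (Ioi (N : ℝ)) fun u => ((Int.fract u : ℝ) : ℂ)) :=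
    (measurable_ofReal.comp measurable_fract).indicator measurableSet_Ioi
  unfold fractTailDensity
  fun_prop

lemma setIntegral_norm_fractTail_sq_le {N : ℕ} (hN : 1 ≤ N) {x T : ℝ} (hx : 0 < x) (hT : 0 < T) :
    ∫ t in Icc (-T) T, ‖fractTail N (x - t * I)‖ ^ 2 ≤
      Real.exp 1 * (2 * Real.pi * ((N : ℝ) ^ (-2 * x) / (2 * x))) := by
  have hbound {a : ℝ} (ha : 0 < a) :
      Integrable (indicator (Iic (-Real.log N)) fun u => Real.exp (a * u)) :=
    (integrableOn_exp_mul_Iic ha _).integrable_indicator measurableSet_Iic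
  have hmeas := measurable_fractTailDensity N x
  have hint : Integrable (fractTailDensity N x) :=
    (hbound hx).mono' hmeas.aestronglyMeasurable (ae_of_all _ (norm_fractTailDensity_le hN x))
  have hsq (u : ℝ) : ‖fractTailDensity N x u‖ ^ 2 ≤
      indicator (Iic (-Real.log N)) (fun u => Real.exp (2 * x * u)) u := by
    refine (pow_le_pow_left₀ (norm_nonneg _) (norm_fractTailDensity_le hN x u) 2).trans_eq ?_
    by_cases hu : u ∈ Iic (-Real.log N)
    · rw [indicator_of_mem hu, indicator_of_mem hu, ← Real.exp_nat_mul]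
      push_cast
      ring_nf
    · simp [indicator_of_notMem hu]
  have hint_sq : Integrable fun u => ‖fractTailDensity N x u‖ ^ 2 :=
    (hbound (a := 2 * x) (by positivity)).mono' (hmeas.norm.pow_const 2).aestronglyMeasurable
      (ae_of_all _ fun u => by simpa using hsq u)
  have hnorm : ∫ u, ‖fractTailDensity N x u‖ ^ 2 ≤ (N : ℝ) ^ (-2 * x) / (2 * x) := by
    refine (integral_mono hint_sq (hbound (by positivity)) hsq).trans_eq ?_
    rw [integral_indicator measurableSet_Iic, integral_exp_mul_Iic (by positivity),
      Real.rpow_def_of_pos (by exact_mod_cast hN)]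
    ring_nf
  have := Real.pi_pos
  simp_rw [fractTail_eq_oscIntegral]
  refine (setIntegral_norm_fourier_sq_le hint hint_sq hT).trans ?_
  gcongr

lemma summable_exp_neg_int_sq : Summable fun k : ℤ => Real.exp (-(k : ℝ) ^ 2 / 4) := by
  refine Summable.of_norm_bounded_eventually
    ((Real.summable_one_div_int_pow.2 (by norm_num : 1 < 2)).mul_left 4) ?_
  refine (Set.finite_singleton 0).subset fun k hk => ?_
  by_contra hk_ne
  refine hk (mem_ofPred.2 ?_)
  have hk_pos : (0 : ℝ) < (k : ℝ) ^ 2 := by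
    have : (k : ℝ) ≠ 0 := by exact_mod_cast hk_ne
    positivity
  rw [Real.norm_of_nonneg (Real.exp_pos _).le, neg_div, Real.exp_neg, mul_one_div,
    inv_le_comm₀ (Real.exp_pos _) (by positivity), inv_div]
  exact (le_add_of_nonneg_right zero_le_one).trans (Real.add_one_le_exp _)

/-- The theta series `∑_{k ∈ ℤ} exp (-k² / 4)`. -/
noncomputable def thetaConst : ℝ := ∑' k : ℤ, Real.exp (-(k : ℝ) ^ 2 / 4)

lemma thetaConst_nonneg : 0 ≤ thetaConst := tsum_nonneg fun _ => (Real.exp_pos _).le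

lemma abs_sub_le_mul_abs_log_sub_log {a b T : ℝ} (ha : 0 < a) (hb : 0 < b) (haT : a ≤ T)
    (hbT : b ≤ T) : |a - b| ≤ T * |Real.log a - Real.log b| := by
  wlog hba : b ≤ a generalizing a b
  · rw [abs_sub_comm, abs_sub_comm (Real.log a)]
    exact this hb ha hbT haT (le_of_not_ge hba)
  have hlog := Real.one_sub_inv_le_log_of_pos (div_pos ha hb)
  rw [Real.log_div ha.ne' hb.ne', inv_div, one_sub_div ha.ne', div_le_iff₀ ha] at hlog
  have hlog_nonneg : 0 ≤ Real.log a - Real.log b := sub_nonneg.2 (Real.log_le_log hb hba)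
  rw [abs_of_nonneg (sub_nonneg.2 hba), abs_of_nonneg hlog_nonneg]
  nlinarith

lemma gaussianKernel_log_sub_log_le {m n N : ℕ} (hm : m < N) (hn : n < N) {T : ℝ} (hT : 0 < T)
    (hNT : N ≤ T) :
    gaussianKernel (T ^ 2)⁻¹ (Real.log (m + 1) - Real.log (n + 1)) ≤
      √Real.pi * T * Real.exp (-((m - n : ℤ) : ℝ) ^ 2 / 4) := by
  have hle {k : ℕ} (hk : k < N) : (k : ℝ) + 1 ≤ T :=
    le_trans (by exact_mod_cast hk) hNT
  have hsep := abs_sub_le_mul_abs_log_sub_log (by positivity) (by positivity) (hle hm) (hle hn)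
  have hsq := pow_le_pow_left₀ (abs_nonneg _) hsep 2
  rw [mul_pow, sq_abs, sq_abs, add_sub_add_right_eq_sub] at hsq
  rw [gaussianKernel, ← Real.sqrt_eq_rpow, div_inv_eq_mul, Real.sqrt_mul Real.pi_pos.le,
    Real.sqrt_sq hT.le]
  gcongr √Real.pi * T * Real.exp ?_
  rw [← div_div, div_inv_eq_mul]
  push_cast
  linarith

lemma one_div_add_one_cpow_line (n : ℕ) (x t : ℝ) :
    1 / ((n : ℂ) + 1) ^ ((x : ℂ) - t * I) =
      ((((n : ℝ) + 1) ^ (-x) : ℝ) : ℂ) * cexp (I * t * (Real.log (n + 1) : ℝ)) := by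
  have hn : (0 : ℝ) < (n : ℝ) + 1 := by positivity
  have hn_ne : (n : ℂ) + 1 ≠ 0 := by exact_mod_cast n.succ_ne_zero
  rw [one_div, ← cpow_neg, neg_sub, sub_eq_neg_add, cpow_add _ _ hn_ne, ofReal_cpow hn.le,
    cpow_def_of_ne_zero hn_ne (t * I), ofReal_log hn.le]
  push_cast
  ring_nf

/-- The frequencies `log (n + 1)` with `n < N ≤ T` are `1 / T`-separated. -/
lemma setIntegral_norm_sum_Ico_sq_le {M N : ℕ} {x T : ℝ} (hT : 0 < T) (hNT : N ≤ T) :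
    ∫ t in Icc (-T) T, ‖∑ n ∈ Finset.Ico M N, 1 / ((n : ℂ) + 1) ^ ((x : ℂ) - t * I)‖ ^ 2 ≤
      Real.exp 1 * (√Real.pi * T * thetaConst *
        ∑ n ∈ Finset.Ico M N, ((n : ℝ) + 1) ^ (-2 * x)) := by
  set s := Finset.Ico M N
  set g : s → ℂ := fun n => ((((n : ℕ) : ℝ) + 1) ^ (-x) : ℝ) with hg
  set φ : s → ℝ := fun n => Real.log ((n : ℕ) + 1)
  have hsum (t : ℝ) : ∑ n ∈ s, 1 / ((n : ℂ) + 1) ^ ((x : ℂ) - t * I) =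
      oscIntegral Measure.count g φ t := by
    rw [oscIntegral, integral_count, ← Finset.sum_coe_sort s]
    exact Finset.sum_congr rfl fun n _ => one_div_add_one_cpow_line n x t
  have hnorm : ∑ n ∈ s, ((n : ℝ) + 1) ^ (-2 * x) = ∫ n, ‖g n‖ ^ 2 ∂Measure.count := by
    rw [integral_count, ← Finset.sum_coe_sort s]
    refine Finset.sum_congr rfl fun n _ => ?_
    rw [hg, norm_real, Real.norm_of_nonneg (by positivity), ← Real.rpow_natCast,
      ← Real.rpow_mul (by positivity)]
    push_cast
    ring_nf
  simp_rw [hsum, hnorm]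
  refine setIntegral_norm_oscIntegral_sq_le .of_finite .of_finite (measurable_of_finite φ) hT
    (ae_of_all _ fun m => .of_finite) (ae_of_all _ fun m => ?_)
  have hinj : Function.Injective fun n : s => ((m : ℕ) - (n : ℕ) : ℤ) := fun a b hab =>
    Subtype.ext (by simp only at hab; omega)
  rw [integral_count]
  calc ∑ n : s, gaussianKernel (T ^ 2)⁻¹ (φ m - φ n)
      ≤ ∑ n : s, √Real.pi * T * Real.exp (-(((m : ℕ) - (n : ℕ) : ℤ) : ℝ) ^ 2 / 4) :=
        Finset.sum_le_sum fun n _ => gaussianKernel_log_sub_log_le (Finset.mem_Ico.1 m.2).2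
          (Finset.mem_Ico.1 n.2).2 hT hNT
    _ ≤ √Real.pi * T * thetaConst := by
        rw [← Finset.mul_sum]
        gcongr
        refine (Finset.sum_map Finset.univ ⟨_, hinj⟩
          fun k : ℤ => Real.exp (-(k : ℝ) ^ 2 / 4)).symm.trans_le ?_
        exact summable_exp_neg_int_sq.sum_le_tsum _ fun _ _ => (Real.exp_pos _).le

lemma setIntegral_norm_pole_sq_le {N : ℕ} (hN : 1 ≤ N) (x T : ℝ) :
    ∫ t in Ioc 1 T, ‖(N : ℂ) ^ (1 - ((x : ℂ) - t * I)) / ((x : ℂ) - t * I - 1)‖ ^ 2 ≤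
      (N : ℝ) ^ (2 - 2 * x) := by
  have hint := integrableOn_Ioi_rpow_of_lt (a := -2) (by norm_num) zero_lt_one
  have hle (t : ℝ) (ht : t ∈ Ioc 1 T) :
      ‖(N : ℂ) ^ (1 - ((x : ℂ) - t * I)) / ((x : ℂ) - t * I - 1)‖ ^ 2 ≤
        (N : ℝ) ^ (2 - 2 * x) * t ^ (-2 : ℝ) := by
    have ht_pos : 0 < t := zero_lt_one.trans ht.1
    have him : t ≤ ‖(x : ℂ) - t * I - 1‖ := by
      simpa [abs_of_pos ht_pos] using abs_im_le_norm ((x : ℂ) - t * I - 1)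
    have hre : (1 - ((x : ℂ) - t * I)).re = 1 - x := by simp
    rw [norm_div, div_pow, norm_natCast_cpow_of_pos hN, hre, Real.rpow_neg ht_pos.le,
      ← div_eq_mul_inv, ← Real.rpow_natCast, ← Real.rpow_mul N.cast_nonneg, Real.rpow_two]
    push_cast
    rw [show (1 - x) * 2 = 2 - 2 * x by ring]
    gcongr
  calc _ ≤ ∫ t in Ioc 1 T, (N : ℝ) ^ (2 - 2 * x) * t ^ (-2 : ℝ) :=
        integral_mono_of_nonneg (ae_of_all _ fun t => sq_nonneg _)
          ((hint.mono_set Ioc_subset_Ioi_self).const_mul _)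
          ((ae_restrict_iff' measurableSet_Ioc).2 (ae_of_all _ hle))
    _ ≤ (N : ℝ) ^ (2 - 2 * x) * ∫ t in Ioi (1 : ℝ), t ^ (-2 : ℝ) := by
        rw [integral_const_mul]
        gcongr ?_ * ?_
        refine setIntegral_mono_set hint ((ae_restrict_iff' measurableSet_Ioi).2
          (ae_of_all _ fun t ht => ?_)) Ioc_subset_Ioi_self.eventuallyLE
        exact Real.rpow_nonneg (zero_le_one.trans (le_of_lt ht)) _
    _ = (N : ℝ) ^ (2 - 2 * x) := by
        rw [integral_Ioi_rpow_of_lt (by norm_num) zero_lt_one]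
        norm_num

lemma continuous_line (x : ℝ) : Continuous fun t : ℝ => (x : ℂ) - t * I := by fun_prop

lemma continuous_fractTail_line {N : ℕ} (hN : 1 ≤ N) {x : ℝ} (hx : 0 < x) :
    Continuous fun t : ℝ => fractTail N ((x : ℂ) - t * I) :=
  continuous_iff_continuousAt.2 fun t =>
    (differentiableAt_fractTail hN (by simpa using hx)).continuousAt.comp
      (f := fun t : ℝ => (x : ℂ) - t * I) (continuous_line x).continuousAt

lemma setIntegral_norm_mul_fractTail_sq_le {N : ℕ} (hN : 1 ≤ N) {x T : ℝ} (hx : 1 / 2 ≤ x)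
    (hT : 1 ≤ T) :
    ∫ t in Ioc 1 T, ‖((x : ℂ) - t * I) * fractTail N ((x : ℂ) - t * I)‖ ^ 2 ≤
      ((x + 1) * T) ^ 2 * (Real.exp 1 * (2 * Real.pi * (N : ℝ) ^ (-2 * x))) := by
  have hx_pos : 0 < x := by linarith
  have hsub : Ioc 1 T ⊆ Icc (-T) T := fun t ht => ⟨by linarith [ht.1], ht.2⟩
  have hcont := continuous_fractTail_line hN hx_pos
  have hint : IntegrableOn (fun t : ℝ => ‖fractTail N ((x : ℂ) - t * I)‖ ^ 2) (Icc (-T) T) :=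
    (hcont.norm.pow 2).integrableOn_Icc
  have hnorm (t : ℝ) (ht : t ∈ Ioc 1 T) : ‖(x : ℂ) - t * I‖ ≤ (x + 1) * T := by
    have := norm_le_abs_re_add_abs_im ((x : ℂ) - t * I)
    simp only [sub_re, ofReal_re, mul_re, I_re, mul_zero, ofReal_im, I_im, mul_one, sub_self,
      sub_zero, sub_im, mul_im, add_zero, zero_sub, abs_neg, abs_of_pos hx_pos,
      abs_of_pos (zero_lt_one.trans ht.1)] at this
    nlinarith [ht.2]
  calc _ ≤ ∫ t in Ioc 1 T, ((x + 1) * T) ^ 2 * ‖fractTail N ((x : ℂ) - t * I)‖ ^ 2 := by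
        refine setIntegral_mono_on
          ((((continuous_line x).mul hcont).norm.pow 2).integrableOn_Ioc)
          ((hint.mono_set hsub).const_mul _) measurableSet_Ioc fun t ht => ?_
        rw [norm_mul, mul_pow]
        gcongr
        exact hnorm t ht
    _ ≤ ((x + 1) * T) ^ 2 * ∫ t in Icc (-T) T, ‖fractTail N ((x : ℂ) - t * I)‖ ^ 2 := by
        rw [integral_const_mul]
        gcongr ?_ * ?_
        exact setIntegral_mono_set hint (ae_of_all _ fun t => sq_nonneg _) hsub.eventuallyLE
    _ ≤ _ := by
        have := Real.pi_pos
        gcongr ?_ * ?_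
        refine (setIntegral_norm_fractTail_sq_le hN hx_pos (by linarith)).trans ?_
        gcongr
        exact div_le_self (by positivity) (by linarith)

/-! ### The mean square of zeta to the right of the critical line -/

/-- The tail `∑_{n > M} n^{-2x}` of the series for `ζ(2x)`. -/
noncomputable def zetaTailSum (x : ℝ) (M : ℕ) : ℝ := ∑' n : ℕ, ((n : ℝ) + M + 1) ^ (-2 * x)

lemma summable_add_one_rpow {x : ℝ} (hx : 1 / 2 < x) :
    Summable fun n : ℕ => ((n : ℝ) + 1) ^ (-2 * x) := by
  simpa using (summable_nat_add_iff 1).2 (Real.summable_nat_rpow.2 (by linarith : -2 * x < -1))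

lemma zetaTailSum_nonneg (x : ℝ) (M : ℕ) : 0 ≤ zetaTailSum x M :=
  tsum_nonneg fun n => by positivity

lemma tendsto_zetaTailSum (x : ℝ) : Tendsto (zetaTailSum x) atTop (𝓝 0) := by
  refine (tendsto_sum_nat_add fun n : ℕ => ((n : ℝ) + 1) ^ (-2 * x)).congr fun M => ?_
  simp only [zetaTailSum]
  push_cast
  rfl

lemma sum_Ico_le_zetaTailSum {x₀ x : ℝ} (hx₀ : 1 / 2 < x₀) (hx : x₀ ≤ x) (M N : ℕ) :
    ∑ n ∈ Finset.Ico M N, ((n : ℝ) + 1) ^ (-2 * x) ≤ zetaTailSum x₀ M := by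
  have hsum : Summable fun n : ℕ => ((n : ℝ) + M + 1) ^ (-2 * x₀) := by
    simpa using (summable_nat_add_iff M).2 (summable_add_one_rpow hx₀)
  rw [Finset.sum_Ico_eq_sum_range]
  refine (Finset.sum_le_sum fun k _ => ?_).trans (hsum.sum_le_tsum _ fun k _ => by positivity)
  push_cast
  rw [add_comm (M : ℝ)]
  have hbase : (1 : ℝ) ≤ k + M + 1 := by linarith [k.cast_nonneg (α := ℝ), M.cast_nonneg (α := ℝ)]
  exact Real.rpow_le_rpow_of_exponent_le hbase (by linarith)

lemma line_ne_one {t : ℝ} (ht : 0 < t) (x : ℝ) : (x : ℂ) - t * I ≠ 1 := fun h => by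
  simpa [ht.ne'] using congrArg im h

lemma continuousOn_zeta_line (x : ℝ) :
    ContinuousOn (fun t : ℝ => riemannZeta ((x : ℂ) - t * I)) (Ioi 0) := fun _ ht =>
  ((differentiableAt_riemannZeta (line_ne_one ht x)).continuousAt.comp
    (f := fun t : ℝ => (x : ℂ) - t * I) (continuous_line x).continuousAt).continuousWithinAt

lemma continuous_sum_line (s : Finset ℕ) (x : ℝ) :
    Continuous fun t : ℝ => ∑ n ∈ s, 1 / ((n : ℂ) + 1) ^ ((x : ℂ) - t * I) := by
  simp_rw [one_div_add_one_cpow_line]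
  fun_prop

lemma norm_add_sub_sq_le (a b c : ℂ) :
    ‖a + b - c‖ ^ 2 ≤ 3 * (‖a‖ ^ 2 + ‖b‖ ^ 2 + ‖c‖ ^ 2) := by
  have htri : ‖a + b - c‖ ≤ ‖a‖ + ‖b‖ + ‖c‖ :=
    (norm_sub_le _ _).trans (by gcongr; exact norm_add_le _ _)
  nlinarith [norm_nonneg (a + b - c), sq_nonneg (‖a‖ - ‖b‖), sq_nonneg (‖a‖ - ‖c‖),
    sq_nonneg (‖b‖ - ‖c‖)]

lemma setIntegral_norm_zeta_sub_zetaPartialSum_sq_le {M N : ℕ} (hN : 1 ≤ N) (hMN : M ≤ N)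
    {x : ℝ} (hx : 0 < x) (T : ℝ) :
    ∫ t in Ioc 1 T, ‖riemannZeta ((x : ℂ) - t * I) - zetaPartialSum M ((x : ℂ) - t * I)‖ ^ 2 ≤
      3 * ((∫ t in Ioc 1 T, ‖∑ n ∈ Finset.Ico M N, 1 / ((n : ℂ) + 1) ^ ((x : ℂ) - t * I)‖ ^ 2) +
        (∫ t in Ioc 1 T, ‖(N : ℂ) ^ (1 - ((x : ℂ) - t * I)) / ((x : ℂ) - t * I - 1)‖ ^ 2) +
        ∫ t in Ioc 1 T, ‖((x : ℂ) - t * I) * fractTail N ((x : ℂ) - t * I)‖ ^ 2) := by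
  have hpos {t : ℝ} (ht : t ∈ Icc 1 T) : 0 < t := zero_lt_one.trans_le ht.1
  have hint {f : ℝ → ℂ} (hf : ContinuousOn f (Icc 1 T)) :
      IntegrableOn (fun t => ‖f t‖ ^ 2) (Ioc 1 T) :=
    (hf.norm.pow 2).integrableOn_Icc.mono_set Ioc_subset_Icc_self
  have hsum_int := hint (continuous_sum_line (Finset.Ico M N) x).continuousOn
  have hpole_int := hint (f := fun t : ℝ => (N : ℂ) ^ (1 - ((x : ℂ) - t * I)) /
      ((x : ℂ) - t * I - 1)) <| by
    refine ContinuousOn.div ?_ (by fun_prop) fun t ht => sub_ne_zero.2 (line_ne_one (hpos ht) x)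
    exact (Continuous.const_cpow (by fun_prop)
      (.inl (by exact_mod_cast (by omega : N ≠ 0)))).continuousOn
  have htail_int := hint (f := fun t : ℝ => ((x : ℂ) - t * I) * fractTail N ((x : ℂ) - t * I))
    ((continuous_line x).mul (continuous_fractTail_line hN hx)).continuousOn
  have hadd_int : IntegrableOn (fun t : ℝ =>
      ‖∑ n ∈ Finset.Ico M N, 1 / ((n : ℂ) + 1) ^ ((x : ℂ) - t * I)‖ ^ 2 +
        ‖(N : ℂ) ^ (1 - ((x : ℂ) - t * I)) / ((x : ℂ) - t * I - 1)‖ ^ 2) (Ioc 1 T) :=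
    hsum_int.add hpole_int
  rw [← integral_add hsum_int hpole_int, ← integral_add hadd_int htail_int, ← integral_const_mul]
  refine setIntegral_mono_on (hint ?_) ((hadd_int.add htail_int).const_mul 3)
    measurableSet_Ioc fun t ht => ?_
  · exact ((continuousOn_zeta_line x).mono fun t ht => hpos ht).sub
      (continuous_sum_line (Finset.range M) x).continuousOn
  · have hsplit : zetaPartialSum N ((x : ℂ) - t * I) = zetaPartialSum M ((x : ℂ) - t * I) +
        ∑ n ∈ Finset.Ico M N, 1 / ((n : ℂ) + 1) ^ ((x : ℂ) - t * I) :=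
      (Finset.sum_range_add_sum_Ico _ hMN).symm
    rw [riemannZeta_eq_of_re_pos hN (by simpa using hx)
      (line_ne_one (hpos (Ioc_subset_Icc_self ht)) x), hsplit, add_assoc, add_sub_assoc,
      add_sub_cancel_left]
    exact norm_add_sub_sq_le _ _ _

lemma natFloor_rpow_le {T x₀ x x₁ : ℝ} (hT : 1 ≤ T) (hx₀ : 0 ≤ x₀) (hx : x ∈ Icc x₀ x₁) :
    (⌊T⌋₊ : ℝ) ^ (-2 * x) ≤ 2 ^ (2 * x₁) * T ^ (-2 * x₀) := by
  have hx_nonneg : 0 ≤ x := hx₀.trans hx.1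
  have hfloor : T / 2 ≤ ⌊T⌋₊ := by
    have : (1 : ℝ) ≤ ⌊T⌋₊ := by exact_mod_cast Nat.le_floor (by exact_mod_cast hT)
    linarith [Nat.lt_floor_add_one T]
  calc (⌊T⌋₊ : ℝ) ^ (-2 * x) ≤ (T / 2) ^ (-2 * x) :=
        Real.rpow_le_rpow_of_nonpos (by positivity) hfloor (by linarith)
    _ = 2 ^ (2 * x) * T ^ (-2 * x) := by
        rw [Real.div_rpow (by positivity) zero_le_two, neg_mul, Real.rpow_neg zero_le_two,
          div_inv_eq_mul, mul_comm]
    _ ≤ 2 ^ (2 * x₁) * T ^ (-2 * x₀) := by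
        refine mul_le_mul (Real.rpow_le_rpow_of_exponent_le one_le_two (by linarith [hx.2]))
          (Real.rpow_le_rpow_of_exponent_le hT (by linarith [hx.1])) ?_ ?_ <;> positivity

lemma setIntegral_norm_sum_Ico_sq_le_zetaTailSum {x₀ x T : ℝ} (hx₀ : 1 / 2 < x₀) (hx : x₀ ≤ x)
    (hT : 0 < T) (M : ℕ) {N : ℕ} (hNT : (N : ℝ) ≤ T) :
    ∫ t in Ioc 1 T, ‖∑ n ∈ Finset.Ico M N, 1 / ((n : ℂ) + 1) ^ ((x : ℂ) - t * I)‖ ^ 2 ≤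
      Real.exp 1 * (√Real.pi * thetaConst) * (T * zetaTailSum x₀ M) := by
  have := thetaConst_nonneg
  have hsub : Ioc 1 T ⊆ Icc (-T) T := fun t ht => ⟨by linarith [ht.1], ht.2⟩
  refine (setIntegral_mono_set ((continuous_sum_line _ x).norm.pow 2).integrableOn_Icc
    (ae_of_all _ fun t => sq_nonneg _) hsub.eventuallyLE).trans
    ((setIntegral_norm_sum_Ico_sq_le hT hNT).trans ?_)
  calc _ ≤ Real.exp 1 * (√Real.pi * T * thetaConst * zetaTailSum x₀ M) := by
        gcongr
        exact sum_Ico_le_zetaTailSum hx₀ hx M _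
    _ = _ := by ring

lemma exists_setIntegral_norm_zeta_sub_zetaPartialSum_sq_le {x₀ : ℝ} (hx₀ : 1 / 2 < x₀) (x₁ : ℝ) :
    ∃ C : ℝ, 0 < C ∧ ∀ x ∈ Icc x₀ x₁, ∀ M : ℕ, ∀ T : ℝ, (M : ℝ) + 1 ≤ T →
      ∫ t in Ioc 1 T, ‖riemannZeta ((x : ℂ) - t * I) - zetaPartialSum M ((x : ℂ) - t * I)‖ ^ 2 ≤
        C * (T * zetaTailSum x₀ M + T ^ (2 - 2 * x₀)) := by
  have := Real.pi_pos
  have := thetaConst_nonneg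
  set c₁ := Real.exp 1 * (√Real.pi * thetaConst)
  set c₂ := (2 : ℝ) ^ (2 * x₁)
  set c₃ := (x₁ + 1) ^ 2 * (Real.exp 1 * (2 * Real.pi)) * c₂
  have hc₁ : 0 ≤ c₁ := by positivity
  have hc₂ : 0 < c₂ := by positivity
  have hc₃ : 0 ≤ c₃ := by positivity
  refine ⟨3 * (c₁ + c₂ + c₃), by positivity, fun x hx M T hMT => ?_⟩
  have hT : 1 ≤ T := by linarith [M.cast_nonneg (α := ℝ)]
  have hT_pos : 0 < T := by linarith
  have hx_pos : 0 < x := by linarith [hx.1]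
  have hN : 1 ≤ ⌊T⌋₊ := Nat.le_floor (by exact_mod_cast hT)
  have hNT : (⌊T⌋₊ : ℝ) ≤ T := Nat.floor_le hT_pos.le
  have hpow := natFloor_rpow_le hT (by linarith) hx
  have hT_pow : T ^ (2 - 2 * x₀) = T ^ 2 * T ^ (-2 * x₀) := by
    rw [← Real.rpow_two, ← Real.rpow_add hT_pos]
    ring_nf
  have hsum := setIntegral_norm_sum_Ico_sq_le_zetaTailSum hx₀ hx.1 hT_pos M hNT
  have hpole := (setIntegral_norm_pole_sq_le hN x T).trans <|
    calc (⌊T⌋₊ : ℝ) ^ (2 - 2 * x) = (⌊T⌋₊ : ℝ) ^ 2 * (⌊T⌋₊ : ℝ) ^ (-2 * x) := by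
          rw [← Real.rpow_two, ← Real.rpow_add (by exact_mod_cast hN)]
          ring_nf
      _ ≤ T ^ 2 * (c₂ * T ^ (-2 * x₀)) := by gcongr
      _ = c₂ * T ^ (2 - 2 * x₀) := by rw [hT_pow]; ring
  have htail := (setIntegral_norm_mul_fractTail_sq_le hN (by linarith [hx.1]) hT).trans <|
    calc ((x + 1) * T) ^ 2 * (Real.exp 1 * (2 * Real.pi * (⌊T⌋₊ : ℝ) ^ (-2 * x)))
        ≤ ((x₁ + 1) * T) ^ 2 * (Real.exp 1 * (2 * Real.pi * (c₂ * T ^ (-2 * x₀)))) := by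
          gcongr
          exact hx.2
      _ = c₃ * T ^ (2 - 2 * x₀) := by rw [hT_pow]; ring
  have hmain := setIntegral_norm_zeta_sub_zetaPartialSum_sq_le hN
    (Nat.le_floor (by linarith) : M ≤ ⌊T⌋₊) hx_pos T
  have htail_nonneg := mul_nonneg hT_pos.le (zetaTailSum_nonneg x₀ M)
  have hpow_nonneg := Real.rpow_nonneg hT_pos.le (2 - 2 * x₀)
  nlinarith [mul_nonneg hc₁ hpow_nonneg, mul_nonneg hc₂.le htail_nonneg,
    mul_nonneg hc₃ htail_nonneg]

lemma exists_setIntegral_norm_zeta_sq_le {x₀ : ℝ} (hx₀ : 1 / 2 < x₀) (x₁ : ℝ) :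
    ∃ C : ℝ, 0 < C ∧ ∀ x ∈ Icc x₀ x₁, ∀ T : ℝ, 1 ≤ T →
      ∫ t in Ioc 1 T, ‖riemannZeta ((x : ℂ) - t * I)‖ ^ 2 ≤ C * T := by
  obtain ⟨C, hC, hbound⟩ := exists_setIntegral_norm_zeta_sub_zetaPartialSum_sq_le hx₀ x₁
  have hnonneg := zetaTailSum_nonneg x₀ 0
  refine ⟨C * (zetaTailSum x₀ 0 + 1), by positivity, fun x hx T hT => ?_⟩
  have hle := hbound x hx 0 T (by simpa using hT)
  simp only [zetaPartialSum, Finset.range_zero, Finset.sum_empty, sub_zero] at hle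
  have hpow : T ^ (2 - 2 * x₀) ≤ T := by
    simpa using Real.rpow_le_rpow_of_exponent_le hT (by linarith : 2 - 2 * x₀ ≤ 1)
  calc _ ≤ C * (T * zetaTailSum x₀ 0 + T) := hle.trans (by gcongr)
    _ = _ := by ring

lemma tendsto_setIntegral_cexp_div (d : ℝ) :
    Tendsto (fun T : ℝ => (∫ t in Ioc 1 T, cexp (I * t * d)) / T) atTop
      (𝓝 (if d = 0 then 1 else 0)) := by
  split_ifs with hd
  · have hlim : Tendsto (fun T : ℝ => ((1 - T⁻¹ : ℝ) : ℂ)) atTop (𝓝 1) := by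
      have := (continuous_ofReal.tendsto _).comp (tendsto_inv_atTop_zero.const_sub (1 : ℝ))
      simpa only [Function.comp_def, sub_zero, ofReal_one] using this
    refine hlim.congr' ?_
    filter_upwards [eventually_ge_atTop 1] with T hT
    have hT_ne : (T : ℂ) ≠ 0 := by exact_mod_cast (zero_lt_one.trans_le hT).ne'
    rw [← intervalIntegral.integral_of_le hT]
    simp [hd, sub_div, hT_ne]
  · rw [tendsto_zero_iff_norm_tendsto_zero]
    refine squeeze_zero' (g := fun T : ℝ => 2 / |d| * T⁻¹) (.of_forall fun _ => norm_nonneg _) ?_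
      (by simpa using tendsto_inv_atTop_zero.const_mul (2 / |d|))
    filter_upwards [eventually_ge_atTop 1] with T hT
    have hnorm : ‖cexp (I * d * T) - cexp (I * d * (1 : ℝ))‖ ≤ 2 :=
      (norm_sub_le _ _).trans_eq (by rw [norm_cexp_I_mul_mul, norm_cexp_I_mul_mul]; norm_num)
    simp_rw [← intervalIntegral.integral_of_le hT, mul_right_comm I _ (d : ℂ)]
    rw [integral_exp_mul_complex (by simp [hd]), norm_div, norm_div, norm_mul, norm_I, one_mul,
      norm_real, norm_real, Real.norm_eq_abs, Real.norm_of_nonneg (by linarith), div_eq_mul_inv _ T]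
    gcongr

lemma tendsto_setIntegral_norm_sum_cexp_sq_div {ι : Type*} (s : Finset ι) (c : ι → ℂ) {l : ι → ℝ}
    (hl : InjOn l s) :
    Tendsto (fun T : ℝ => (∫ t in Ioc 1 T, ‖∑ n ∈ s, c n * cexp (I * t * l n)‖ ^ 2) / T) atTop
      (𝓝 (∑ n ∈ s, ‖c n‖ ^ 2)) := by
  classical
  have hexpand (t : ℝ) : ((‖∑ n ∈ s, c n * cexp (I * t * l n)‖ ^ 2 : ℝ) : ℂ) =
      ∑ n ∈ s, ∑ m ∈ s, c n * (starRingEnd ℂ) (c m) * cexp (I * t * (l n - l m : ℝ)) := by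
    rw [← normSq_eq_norm_sq, ← mul_conj, map_sum, Finset.sum_mul_sum]
    refine Finset.sum_congr rfl fun n _ => Finset.sum_congr rfl fun m _ => ?_
    rw [map_mul, ← exp_conj, mul_mul_mul_comm, ← Complex.exp_add]
    simp only [map_mul, conj_I, conj_ofReal]
    push_cast
    ring_nf
  have hmean (T : ℝ) :
      (((∫ t in Ioc 1 T, ‖∑ n ∈ s, c n * cexp (I * t * l n)‖ ^ 2) / T : ℝ) : ℂ) =
        ∑ n ∈ s, ∑ m ∈ s, c n * (starRingEnd ℂ) (c m) *
          ((∫ t in Ioc 1 T, cexp (I * t * (l n - l m : ℝ))) / T) := by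
    have hint (n m : ι) : IntegrableOn (fun t : ℝ =>
        c n * (starRingEnd ℂ) (c m) * cexp (I * t * (l n - l m : ℝ))) (Ioc 1 T) :=
      (by fun_prop : Continuous _).integrableOn_Ioc
    rw [ofReal_div, ← integral_complex_ofReal]
    simp_rw [hexpand]
    rw [integral_finsetSum _ fun n _ => integrable_finsetSum _ fun m _ => hint n m, Finset.sum_div]
    refine Finset.sum_congr rfl fun n _ => ?_
    rw [integral_finsetSum _ fun m _ => hint n m, Finset.sum_div]
    exact Finset.sum_congr rfl fun m _ => by rw [integral_const_mul, mul_div_assoc]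
  have hdiag : ((∑ n ∈ s, ‖c n‖ ^ 2 : ℝ) : ℂ) = ∑ n ∈ s, ∑ m ∈ s, c n * (starRingEnd ℂ) (c m) *
      (if l n - l m = 0 then 1 else 0) := by
    rw [ofReal_sum]
    refine Finset.sum_congr rfl fun n hn => ?_
    rw [Finset.sum_eq_single_of_mem n hn fun m hm hmn => by
      rw [if_neg (sub_ne_zero.2 fun h => hmn (hl hn hm h).symm), mul_zero]]
    rw [sub_self, if_pos rfl, mul_one, mul_conj, normSq_eq_norm_sq]
  have hlim := tendsto_finsetSum s fun n _ => tendsto_finsetSum s fun m _ =>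
    (tendsto_setIntegral_cexp_div (l n - l m)).const_mul (c n * (starRingEnd ℂ) (c m))
  simp_rw [← hmean, ← hdiag] at hlim
  simpa only [Function.comp_def, ofReal_re] using (continuous_re.tendsto _).comp hlim

lemma tendsto_setIntegral_norm_zetaPartialSum_sq_div (M : ℕ) (x : ℝ) :
    Tendsto (fun T : ℝ => (∫ t in Ioc 1 T, ‖zetaPartialSum M ((x : ℂ) - t * I)‖ ^ 2) / T) atTop
      (𝓝 (∑ n ∈ Finset.range M, ((n : ℝ) + 1) ^ (-2 * x))) := by
  have hinj : InjOn (fun n : ℕ => Real.log (n + 1)) (Finset.range M) := fun m _ n _ h => by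
    have := Real.log_injOn_pos (show (0 : ℝ) < m + 1 by positivity)
      (show (0 : ℝ) < n + 1 by positivity) h
    exact_mod_cast add_right_cancel this
  have hsq (n : ℕ) : ((n : ℝ) + 1) ^ (-2 * x) = ‖((((n : ℝ) + 1) ^ (-x) : ℝ) : ℂ)‖ ^ 2 := by
    rw [norm_real, Real.norm_of_nonneg (by positivity), ← Real.rpow_natCast,
      ← Real.rpow_mul (by positivity)]
    push_cast
    ring_nf
  simp_rw [zetaPartialSum, one_div_add_one_cpow_line, hsq]
  exact tendsto_setIntegral_norm_sum_cexp_sq_div _ _ hinj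

lemma memLp_two_of_continuousOn {f : ℝ → ℂ} {a b : ℝ} (hf : ContinuousOn f (Icc a b)) :
    MemLp f 2 (volume.restrict (Ioc a b)) := by
  rw [memLp_two_iff_integrable_sq_norm
    ((hf.mono Ioc_subset_Icc_self).aestronglyMeasurable measurableSet_Ioc)]
  exact (hf.norm.pow 2).integrableOn_Icc.mono_set Ioc_subset_Icc_self

lemma toReal_eLpNorm_two {α : Type*} [MeasurableSpace α] {μ : Measure α} {f : α → ℂ}
    (hf : MemLp f 2 μ) : (eLpNorm f 2 μ).toReal = √(∫ t, ‖f t‖ ^ 2 ∂μ) := by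
  rw [hf.eLpNorm_eq_integral_rpow_norm (by norm_num) (by norm_num),
    ENNReal.toReal_ofReal (by positivity), Real.sqrt_eq_rpow]
  norm_num

lemma abs_sqrt_integral_norm_sq_sub_le {α : Type*} [MeasurableSpace α] {μ : Measure α}
    {f g : α → ℂ} (hf : MemLp f 2 μ) (hg : MemLp g 2 μ) :
    |√(∫ t, ‖f t‖ ^ 2 ∂μ) - √(∫ t, ‖g t‖ ^ 2 ∂μ)| ≤ √(∫ t, ‖f t - g t‖ ^ 2 ∂μ) := by
  have hfg := toReal_eLpNorm_two (hf.sub hg)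
  simp only [Pi.sub_apply] at hfg
  rw [← toReal_eLpNorm_two hf, ← toReal_eLpNorm_two hg, ← hfg, ← Lp.norm_toLp f hf,
    ← Lp.norm_toLp g hg, ← Lp.norm_toLp _ (hf.sub hg), MemLp.toLp_sub]
  exact abs_norm_sub_norm_le _ _

lemma tendsto_setIntegral_norm_sq_div_of_approx {F : ℝ → ℂ} {a c : ℝ} {w : ℝ → ℝ} (hc : 0 ≤ c)
    (hw : ∀ᶠ T in atTop, 0 < w T) (hF : ContinuousOn F (Ici a))
    (happrox : ∀ ε > 0, ∃ (G : ℝ → ℂ) (c' : ℝ), ContinuousOn G (Ici a) ∧ |√c' - √c| < ε ∧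
      Tendsto (fun T => (∫ t in Ioc a T, ‖G t‖ ^ 2) / w T) atTop (𝓝 c') ∧
      ∀ᶠ T in atTop, ∫ t in Ioc a T, ‖F t - G t‖ ^ 2 ≤ ε * w T) :
    Tendsto (fun T => (∫ t in Ioc a T, ‖F t‖ ^ 2) / w T) atTop (𝓝 c) := by
  suffices hsqrt : Tendsto (fun T => √((∫ t in Ioc a T, ‖F t‖ ^ 2) / w T)) atTop (𝓝 √c) by
    have hsq := hsqrt.pow 2
    rw [Real.sq_sqrt hc] at hsq
    refine hsq.congr' (hw.mono fun T hT => Real.sq_sqrt (div_nonneg ?_ hT.le))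
    exact integral_nonneg fun t => sq_nonneg _
  refine Metric.tendsto_nhds.2 fun ε hε => ?_
  obtain ⟨G, c', hG, hc', hlim, herr⟩ := happrox (min (ε / 3) ((ε / 3) ^ 2)) (by positivity)
  have hlim_sqrt := (Real.continuous_sqrt.tendsto _).comp hlim
  filter_upwards [Metric.tendsto_nhds.1 hlim_sqrt (ε / 3) (by positivity), herr, hw]
    with T hT_lim hT_err hT_pos
  have hmemLp {H : ℝ → ℂ} (hH : ContinuousOn H (Ici a)) : MemLp H 2 (volume.restrict (Ioc a T)) :=
    memLp_two_of_continuousOn (hH.mono Icc_subset_Ici_self)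
  have hsqrt_err : √((∫ t in Ioc a T, ‖F t - G t‖ ^ 2) / w T) ≤ ε / 3 := by
    refine Real.sqrt_le_iff.2 ⟨by positivity, (div_le_iff₀ hT_pos).2 (hT_err.trans ?_)⟩
    gcongr
    exact min_le_right _ _
  have htri : |√((∫ t in Ioc a T, ‖F t‖ ^ 2) / w T) - √((∫ t in Ioc a T, ‖G t‖ ^ 2) / w T)| ≤
      ε / 3 := by
    refine le_trans ?_ hsqrt_err
    rw [Real.sqrt_div' _ hT_pos.le, Real.sqrt_div' _ hT_pos.le, Real.sqrt_div' _ hT_pos.le,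
      ← sub_div, abs_div, abs_of_nonneg (Real.sqrt_nonneg (w T))]
    gcongr
    exact abs_sqrt_integral_norm_sq_sub_le (hmemLp hF) (hmemLp hG)
  rw [Real.dist_eq] at hT_lim ⊢
  have hc'_lt := hc'.trans_le (min_le_left _ _)
  simp only [Function.comp_apply, abs_lt, abs_le] at *
  constructor <;> linarith

lemma re_riemannZeta_two_mul {x : ℝ} (hx : 1 / 2 < x) :
    (riemannZeta ((2 * x : ℝ) : ℂ)).re = ∑' n : ℕ, ((n : ℝ) + 1) ^ (-2 * x) := by
  rw [zeta_eq_tsum_one_div_nat_add_one_cpow (by rw [ofReal_re]; linarith),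
    ← ofReal_re (∑' n : ℕ, ((n : ℝ) + 1) ^ (-2 * x)), ofReal_tsum]
  congr 1
  refine tsum_congr fun n => ?_
  rw [ofReal_cpow (by positivity), one_div, ← cpow_neg]
  push_cast
  ring_nf

lemma re_riemannZeta_two_mul_pos {x : ℝ} (hx : 1 / 2 < x) :
    0 < (riemannZeta ((2 * x : ℝ) : ℂ)).re := by
  rw [re_riemannZeta_two_mul hx]
  exact (summable_add_one_rpow hx).tsum_pos (fun n => by positivity) 0 (by simp)

lemma tendsto_setIntegral_norm_zeta_sq_div {x : ℝ} (hx : 1 / 2 < x) :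
    Tendsto (fun T : ℝ => (∫ t in Ioc 1 T, ‖riemannZeta ((x : ℂ) - t * I)‖ ^ 2) / T) atTop
      (𝓝 (riemannZeta ((2 * x : ℝ) : ℂ)).re) := by
  obtain ⟨C, -, hbound⟩ := exists_setIntegral_norm_zeta_sub_zetaPartialSum_sq_le hx x
  refine tendsto_setIntegral_norm_sq_div_of_approx (re_riemannZeta_two_mul_pos hx).le
    (eventually_gt_atTop 0)
    ((continuousOn_zeta_line x).mono fun t ht => zero_lt_one.trans_le (mem_Ici.1 ht))
    fun ε hε => ?_
  have hsum : Tendsto (fun M : ℕ => √(∑ n ∈ Finset.range M, ((n : ℝ) + 1) ^ (-2 * x))) atTop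
      (𝓝 √(riemannZeta ((2 * x : ℝ) : ℂ)).re) := by
    rw [re_riemannZeta_two_mul hx]
    exact (Real.continuous_sqrt.tendsto _).comp
      (summable_add_one_rpow hx).hasSum.tendsto_sum_nat
  have htail : Tendsto (fun M => C * zetaTailSum x M) atTop (𝓝 0) := by
    simpa using (tendsto_zetaTailSum x).const_mul C
  have hpow : Tendsto (fun T : ℝ => C * T ^ (1 - 2 * x)) atTop (𝓝 0) := by
    simpa using (tendsto_rpow_neg_atTop (by linarith : 0 < 2 * x - 1)).const_mul C
  obtain ⟨M, hM_sum, hM_tail⟩ := ((Metric.tendsto_nhds.1 hsum ε hε).and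
    (htail.eventually_lt_const (half_pos hε))).exists
  refine ⟨fun t => zetaPartialSum M ((x : ℂ) - t * I), _,
    (continuous_sum_line (Finset.range M) x).continuousOn, hM_sum,
    tendsto_setIntegral_norm_zetaPartialSum_sq_div M x, ?_⟩
  filter_upwards [hpow.eventually_lt_const (half_pos hε), eventually_ge_atTop ((M : ℝ) + 1)]
    with T hT_pow hT
  have hT_pos : 0 < T := by linarith [M.cast_nonneg (α := ℝ)]
  calc _ ≤ C * (T * zetaTailSum x M + T ^ (2 - 2 * x)) := hbound x ⟨le_rfl, le_rfl⟩ M T hT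
    _ = (C * zetaTailSum x M + C * T ^ (1 - 2 * x)) * T := by
        rw [show 2 - 2 * x = 1 - 2 * x + 1 by ring, Real.rpow_add_one hT_pos.ne']
        ring
    _ ≤ ε * T := by
        gcongr
        linarith

/-! ### The modulus of the factor in the functional equation -/

/-- The logarithm of `‖u - i t‖`. -/
noncomputable def logNormLine (t u : ℝ) : ℝ := Real.log (u ^ 2 + t ^ 2) / 2

lemma log_norm_line (x t : ℝ) : Real.log ‖(x : ℂ) - t * I‖ = logNormLine t x := by
  have hsq : ‖(x : ℂ) - t * I‖ ^ 2 = x ^ 2 + t ^ 2 := by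
    rw [← normSq_eq_norm_sq, normSq_apply]
    simp
    ring
  rw [logNormLine, ← hsq, Real.log_pow]
  push_cast
  ring

lemma logNormLine_le_logNormLine {t u v : ℝ} (ht : 0 < t) (hu : 0 ≤ u) (huv : u ≤ v) :
    logNormLine t u ≤ logNormLine t v := by
  unfold logNormLine
  gcongr

lemma log_le_logNormLine_left {t : ℝ} (ht : 0 < t) (u : ℝ) : Real.log t ≤ logNormLine t u := by
  have hlog := Real.log_le_log (by positivity) (le_add_of_nonneg_left (sq_nonneg u) : t ^ 2 ≤ _)
  rw [Real.log_pow] at hlog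
  push_cast at hlog
  unfold logNormLine
  linarith

lemma log_le_logNormLine_right (t : ℝ) {u : ℝ} (hu : 0 < u) : Real.log u ≤ logNormLine t u := by
  have hlog := Real.log_le_log (by positivity) (le_add_of_nonneg_right (sq_nonneg t) : u ^ 2 ≤ _)
  rw [Real.log_pow] at hlog
  push_cast at hlog
  unfold logNormLine
  linarith

lemma logNormLine_le {t : ℝ} (ht : 1 ≤ t) (u : ℝ) : logNormLine t u ≤ Real.log t + u ^ 2 / t := by
  have hfactor : u ^ 2 + t ^ 2 = t ^ 2 * (1 + u ^ 2 / t ^ 2) := by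
    field_simp
    ring
  have hlog := Real.log_le_sub_one_of_pos (show 0 < 1 + u ^ 2 / t ^ 2 by positivity)
  have hdiv : u ^ 2 / t ^ 2 ≤ u ^ 2 / t := by
    gcongr
    nlinarith
  have hdiv_nonneg : 0 ≤ u ^ 2 / t := by positivity
  rw [logNormLine, hfactor, Real.log_mul (by positivity) (by positivity), Real.log_pow]
  push_cast
  linarith

lemma hasDerivAt_logNormLine {t : ℝ} (ht : 0 < t) (u : ℝ) :
    HasDerivAt (logNormLine t) (u / (u ^ 2 + t ^ 2)) u := by
  have hsq : HasDerivAt (fun u : ℝ => u ^ 2 + t ^ 2) (2 * u) u := by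
    simpa using ((hasDerivAt_id u).pow 2).add_const (t ^ 2)
  refine ((hsq.log (by positivity)).div_const 2).congr_deriv ?_
  field_simp

lemma abs_logNormLine_add_one_sub_le {t u : ℝ} (ht : 1 ≤ t) (hu : 0 ≤ u) :
    |logNormLine t (u + 1) - logNormLine t u - u / (u ^ 2 + t ^ 2)| ≤ 1 / (u ^ 2 + t ^ 2) := by
  have hderiv := hasDerivAt_logNormLine (zero_lt_one.trans_le ht)
  obtain ⟨ξ, hξ, hslope⟩ := exists_hasDerivAt_eq_slope (logNormLine t) _ (lt_add_one u)
    (fun v _ => (hderiv v).continuousAt.continuousWithinAt) fun v _ => hderiv v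
  rw [add_sub_cancel_left, div_one] at hslope
  have hdiff : ξ / (ξ ^ 2 + t ^ 2) - u / (u ^ 2 + t ^ 2) =
      (ξ - u) * ((t ^ 2 - u * ξ) / (ξ ^ 2 + t ^ 2)) / (u ^ 2 + t ^ 2) := by
    field_simp
    ring
  have hfrac : |t ^ 2 - u * ξ| / (ξ ^ 2 + t ^ 2) ≤ 1 := by
    rw [div_le_one (by positivity), abs_le]
    constructor <;> nlinarith [hξ.1, hξ.2, mul_nonneg hu (hu.trans hξ.1.le), sq_nonneg t]
  rw [← hslope, hdiff, abs_div, abs_of_pos (by positivity : 0 < u ^ 2 + t ^ 2)]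
  gcongr
  rw [abs_mul, abs_div, abs_of_pos (by positivity : 0 < ξ ^ 2 + t ^ 2)]
  refine mul_le_one₀ ?_ (by positivity) hfrac
  rw [abs_of_nonneg] <;> linarith [hξ.1, hξ.2]

lemma sum_one_div_sq_add_sq_le {t : ℝ} (ht : 1 ≤ t) (n : ℕ) :
    ∑ k ∈ Finset.range n, 1 / ((k : ℝ) ^ 2 + t ^ 2) ≤ 4 / t := by
  have htelescope : ∑ k ∈ Finset.range n, 1 / ((k : ℝ) ^ 2 + t ^ 2) ≤
      2 / (t - 1 / 2) - 2 / (n + t - 1 / 2) := by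
    induction n with
    | zero => simp
    | succ n ih =>
      have := n.cast_nonneg (α := ℝ)
      have hpos : (0 : ℝ) < n + t - 1 / 2 := by linarith
      have hpos' : (0 : ℝ) < n + 1 + t - 1 / 2 := by linarith
      have hterm : 1 / ((n : ℝ) ^ 2 + t ^ 2) ≤ 2 / (n + t - 1 / 2) - 2 / (n + 1 + t - 1 / 2) := by
        rw [div_sub_div _ _ hpos.ne' hpos'.ne', div_le_div_iff₀ (by positivity) (by positivity)]
        nlinarith [sq_nonneg ((n : ℝ) - t)]
      rw [Finset.sum_range_succ]
      push_cast
      linarith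
  have hlast : 0 ≤ 2 / (n + t - 1 / 2) :=
    div_nonneg zero_le_two (by linarith [n.cast_nonneg (α := ℝ)])
  have hfirst : 2 / (t - 1 / 2) ≤ 4 / t := by
    rw [div_le_div_iff₀ (by linarith) (by linarith)]
    linarith
  linarith

lemma tendsto_logNormLine_sub_log (t y : ℝ) :
    Tendsto (fun n : ℕ => logNormLine t (y + n) - Real.log n) atTop (𝓝 0) := by
  have hinv : Tendsto (fun n : ℕ => (n : ℝ)⁻¹) atTop (𝓝 0) := tendsto_inv_atTop_nhds_zero_nat
  have hquot := ((hinv.const_mul y).add_const 1).pow 2 |>.add ((hinv.const_mul t).pow 2)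
  have hlog := (hquot.log (by norm_num)).div_const 2
  norm_num at hlog
  refine hlog.congr' ?_
  filter_upwards [eventually_ge_atTop 1,
    (tendsto_natCast_atTop_atTop (R := ℝ)).eventually_gt_atTop (-y)] with n hn hny
  have : (0 : ℝ) < n := by exact_mod_cast hn
  have hyn : 0 < y + n := by linarith
  have hfactor : (y * (n : ℝ)⁻¹ + 1) ^ 2 + (t * (n : ℝ)⁻¹) ^ 2 =
      ((y + n) ^ 2 + t ^ 2) / (n : ℝ) ^ 2 := by
    field_simp
  rw [hfactor, Real.log_div (by positivity) (by positivity), Real.log_pow, logNormLine]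
  push_cast
  ring

/-- The part of `log ‖GammaSeq (x - i t) n‖` that depends on `x` and `t`; the remainder is
`log n!`. -/
noncomputable def logNormGammaSeq (n : ℕ) (t x : ℝ) : ℝ :=
  x * Real.log n - ∑ k ∈ Finset.range (n + 1), logNormLine t (x + k)

lemma line_ne_neg_natCast {t : ℝ} (ht : 0 < t) (x : ℝ) (k : ℕ) : (x : ℂ) - t * I ≠ -k := fun h => by
  simpa [ht.ne'] using congrArg im h

lemma Gamma_line_ne_zero {t : ℝ} (ht : 0 < t) (x : ℝ) : Complex.Gamma ((x : ℂ) - t * I) ≠ 0 :=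
  Complex.Gamma_ne_zero (line_ne_neg_natCast ht x)

lemma log_norm_GammaSeq_line {t : ℝ} (ht : 0 < t) (x : ℝ) {n : ℕ} (hn : 0 < n) :
    Real.log ‖GammaSeq ((x : ℂ) - t * I) n‖ = Real.log n.factorial + logNormGammaSeq n t x := by
  have hn_pos : (0 : ℝ) < n := by exact_mod_cast hn
  have hne (k : ℕ) : ‖(x : ℂ) - t * I + k‖ ≠ 0 :=
    norm_ne_zero_iff.2 fun h => line_ne_neg_natCast ht x k (eq_neg_of_add_eq_zero_left h)
  have hlog (k : ℕ) : Real.log ‖(x : ℂ) - t * I + k‖ = logNormLine t (x + k) := by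
    rw [← log_norm_line, sub_add_eq_add_sub, ofReal_add, ofReal_natCast]
  rw [GammaSeq, norm_div, norm_mul, norm_prod, norm_natCast_cpow_of_pos hn, norm_natCast,
    Real.log_div (by positivity) (Finset.prod_ne_zero_iff.2 fun k _ => hne k),
    Real.log_mul (by positivity) (by positivity), Real.log_rpow hn_pos,
    Real.log_prod fun k _ => hne k]
  simp only [hlog, logNormGammaSeq, sub_re, ofReal_re, re_ofReal_mul, I_re, mul_zero, sub_zero]
  ring

lemma hasDerivAt_logNormGammaSeq (n : ℕ) {t : ℝ} (ht : 0 < t) (x : ℝ) :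
    HasDerivAt (logNormGammaSeq n t)
      (Real.log n - ∑ k ∈ Finset.range (n + 1), (x + k) / ((x + k) ^ 2 + t ^ 2)) x := by
  have hsum : HasDerivAt (fun x => ∑ k ∈ Finset.range (n + 1), logNormLine t (x + k))
      (∑ k ∈ Finset.range (n + 1), (x + k) / ((x + k) ^ 2 + t ^ 2)) x :=
    HasDerivAt.fun_sum fun k _ => (hasDerivAt_logNormLine ht (x + k)).comp_add_const x k
  exact ((hasDerivAt_mul_const (Real.log n)).sub hsum :)

lemma abs_deriv_logNormGammaSeq_sub_log_le {t y : ℝ} (ht : 1 ≤ t) (hy : 0 ≤ y) {n : ℕ}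
    (hn : 0 < n) :
    |Real.log n - (∑ k ∈ Finset.range (n + 1), (y + k) / ((y + k) ^ 2 + t ^ 2)) - Real.log t| ≤
      (4 + y ^ 2) / t + (logNormLine t (y + 1 + n) - Real.log n) := by
  have ht_pos : 0 < t := by linarith
  have htelescope : ∑ k ∈ Finset.range (n + 1),
      (logNormLine t (y + k + 1) - logNormLine t (y + k)) =
        logNormLine t (y + 1 + n) - logNormLine t y := by
    have := Finset.sum_range_sub (fun k : ℕ => logNormLine t (y + k)) (n + 1)
    push_cast at this
    simpa only [add_zero, ← add_assoc, add_right_comm y (n : ℝ) 1] using this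
  have herr : |logNormLine t (y + 1 + n) - logNormLine t y -
      ∑ k ∈ Finset.range (n + 1), (y + k) / ((y + k) ^ 2 + t ^ 2)| ≤ 4 / t := by
    rw [← htelescope, ← Finset.sum_sub_distrib]
    refine (Finset.abs_sum_le_sum_abs _ _).trans <|
      (Finset.sum_le_sum fun k _ => ?_).trans (sum_one_div_sq_add_sq_le ht (n + 1))
    refine (abs_logNormLine_add_one_sub_le ht (by positivity)).trans ?_
    gcongr
    linarith
  have hn_pos : (0 : ℝ) < n := by exact_mod_cast hn
  have hlow := log_le_logNormLine_left ht_pos y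
  have hupp := logNormLine_le ht y
  have hlog : Real.log n ≤ logNormLine t (y + 1 + n) :=
    (Real.log_le_log hn_pos (by linarith)).trans (log_le_logNormLine_right t (by positivity))
  rw [add_div]
  rw [abs_le] at herr ⊢
  constructor <;> linarith [sq_nonneg y, div_nonneg (sq_nonneg y) ht_pos.le]

lemma abs_logNormGammaSeq_sub_le {t x : ℝ} (ht : 1 ≤ t) (hx : 1 / 2 ≤ x) {n : ℕ} (hn : 0 < n) :
    |logNormGammaSeq n t x - logNormGammaSeq n t (1 / 2) - (x - 1 / 2) * Real.log t| ≤
      ((4 + x ^ 2) / t + (logNormLine t (x + 1 + n) - Real.log n)) * (x - 1 / 2) := by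
  have ht_pos : 0 < t := by linarith
  have hderiv (y : ℝ) := (hasDerivAt_logNormGammaSeq n ht_pos y).sub
    ((hasDerivAt_id y).mul_const (Real.log t))
  have hbound (y : ℝ) (hy : y ∈ Icc (1 / 2) x) :
      ‖Real.log n - (∑ k ∈ Finset.range (n + 1), (y + k) / ((y + k) ^ 2 + t ^ 2)) -
        1 * Real.log t‖ ≤ (4 + x ^ 2) / t + (logNormLine t (x + 1 + n) - Real.log n) := by
    have hy_nonneg : 0 ≤ y := by linarith [hy.1]
    rw [one_mul]
    refine (abs_deriv_logNormGammaSeq_sub_log_le ht hy_nonneg hn).trans ?_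
    have hmono := logNormLine_le_logNormLine ht_pos (by positivity)
      (by linarith [hy.2] : y + 1 + n ≤ x + 1 + n)
    gcongr
    exact hy.2
  have hmean := (convex_Icc (1 / 2 : ℝ) x).norm_image_sub_le_of_norm_hasDerivWithin_le
    (fun y _ => (hderiv y).hasDerivWithinAt) hbound (left_mem_Icc.2 hx) (right_mem_Icc.2 hx)
  rw [Real.norm_eq_abs, Real.norm_of_nonneg (by linarith : 0 ≤ x - 1 / 2)] at hmean
  refine le_of_eq_of_le (congrArg _ ?_) hmean
  simp only [Pi.sub_apply, id_eq]
  ring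

lemma abs_log_norm_Gamma_sub_le {t x : ℝ} (ht : 1 ≤ t) (hx : 1 / 2 ≤ x) :
    |Real.log ‖Complex.Gamma ((x : ℂ) - t * I)‖ -
        Real.log ‖Complex.Gamma (((1 / 2 : ℝ) : ℂ) - t * I)‖ - (x - 1 / 2) * Real.log t| ≤
      (4 + x ^ 2) / t * (x - 1 / 2) := by
  have ht_pos : 0 < t := by linarith
  have hlim (y : ℝ) : Tendsto (fun n : ℕ => Real.log ‖GammaSeq ((y : ℂ) - t * I) n‖) atTop
      (𝓝 (Real.log ‖Complex.Gamma ((y : ℂ) - t * I)‖)) :=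
    (GammaSeq_tendsto_Gamma _).norm.log (norm_ne_zero_iff.2 (Gamma_line_ne_zero ht_pos y))
  have hlim_bound := ((tendsto_logNormLine_sub_log t (x + 1)).const_add
    ((4 + x ^ 2) / t)).mul_const (x - 1 / 2)
  rw [add_zero] at hlim_bound
  refine le_of_tendsto_of_tendsto
    (((hlim x).sub (hlim (1 / 2))).sub_const ((x - 1 / 2) * Real.log t)).abs hlim_bound ?_
  filter_upwards [eventually_gt_atTop 0] with n hn
  rw [log_norm_GammaSeq_line ht_pos x hn, log_norm_GammaSeq_line ht_pos _ hn,
    add_sub_add_left_eq_sub]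
  exact abs_logNormGammaSeq_sub_le ht hx hn

lemma norm_Gamma_half_sub_sq (t : ℝ) :
    ‖Complex.Gamma (((1 / 2 : ℝ) : ℂ) - t * I)‖ ^ 2 = Real.pi / Real.cosh (Real.pi * t) := by
  have hreflection := Complex.Gamma_mul_Gamma_one_sub (((1 / 2 : ℝ) : ℂ) - t * I)
  have hconj : (1 : ℂ) - (((1 / 2 : ℝ) : ℂ) - t * I) =
      (starRingEnd ℂ) (((1 / 2 : ℝ) : ℂ) - t * I) := by
    simp only [map_sub, map_mul, conj_ofReal, conj_I]
    push_cast
    ring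
  have hsin : Complex.sin (Real.pi * (((1 / 2 : ℝ) : ℂ) - t * I)) =
      (Real.cosh (Real.pi * t) : ℝ) := by
    rw [show (Real.pi : ℂ) * (((1 / 2 : ℝ) : ℂ) - t * I) = Real.pi / 2 - Real.pi * t * I by
      push_cast; ring, Complex.sin_pi_div_two_sub, Complex.cos_mul_I]
    push_cast
    rfl
  rw [hconj, Complex.Gamma_conj, mul_conj, normSq_eq_norm_sq, hsin] at hreflection
  exact_mod_cast hreflection

lemma norm_cos_pi_mul_div_two_sq (x t : ℝ) :
    ‖Complex.cos (Real.pi * ((x : ℂ) - t * I) / 2)‖ ^ 2 =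
      (Real.cosh (Real.pi * t) + Real.cos (Real.pi * x)) / 2 := by
  have hconj : (starRingEnd ℂ) (Real.pi * ((x : ℂ) - t * I) / 2) =
      Real.pi * ((x : ℂ) + t * I) / 2 := by
    simp [map_ofNat]
  rw [← ofReal_inj, ← normSq_eq_norm_sq, ← mul_conj, ← Complex.cos_conj, hconj]
  have hadd := Complex.cos_add (Real.pi * ((x : ℂ) - t * I) / 2) (Real.pi * ((x : ℂ) + t * I) / 2)
  have hsub := Complex.cos_sub (Real.pi * ((x : ℂ) - t * I) / 2) (Real.pi * ((x : ℂ) + t * I) / 2)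
  rw [show Real.pi * ((x : ℂ) - t * I) / 2 + Real.pi * ((x : ℂ) + t * I) / 2 = Real.pi * x by ring]
    at hadd
  rw [show Real.pi * ((x : ℂ) - t * I) / 2 - Real.pi * ((x : ℂ) + t * I) / 2 =
    -(Real.pi * t * I) by ring, Complex.cos_neg, Complex.cos_mul_I] at hsub
  push_cast
  linear_combination (-hadd - hsub) / 2

/-- The factor `χ(1 - z)` of the functional equation `ζ(1 - z) = χ(1 - z) ζ(z)`. -/
noncomputable def zetaFactor (z : ℂ) : ℂ :=
  2 * (2 * Real.pi) ^ (-z) * Complex.Gamma z * Complex.cos (Real.pi * z / 2)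

lemma norm_zetaFactor_sq (x t : ℝ) :
    ‖zetaFactor ((x : ℂ) - t * I)‖ ^ 2 = 2 * (2 * Real.pi) ^ (-2 * x) *
      ‖Complex.Gamma ((x : ℂ) - t * I)‖ ^ 2 *
        (Real.cosh (Real.pi * t) + Real.cos (Real.pi * x)) := by
  have := Real.pi_pos
  have hpow : ‖(2 * Real.pi : ℂ) ^ (-((x : ℂ) - t * I))‖ ^ 2 = (2 * Real.pi) ^ (-2 * x) := by
    rw [show (2 * Real.pi : ℂ) = ((2 * Real.pi : ℝ) : ℂ) by push_cast; rfl,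
      norm_cpow_eq_rpow_re_of_pos (by positivity), ← Real.rpow_natCast,
      ← Real.rpow_mul (by positivity)]
    simp [mul_comm]
  rw [zetaFactor, norm_mul, norm_mul, norm_mul, mul_pow, mul_pow, mul_pow,
    norm_cos_pi_mul_div_two_sq, hpow, norm_ofNat]
  ring

lemma le_cosh_pi_mul {t : ℝ} (ht : 0 ≤ t) : t ≤ Real.cosh (Real.pi * t) :=
  calc t ≤ Real.pi * t := le_mul_of_one_le_left ht (by linarith [Real.pi_gt_three])
    _ ≤ Real.sinh (Real.pi * t) := Real.self_le_sinh_iff.2 (mul_nonneg Real.pi_pos.le ht)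
    _ ≤ Real.cosh (Real.pi * t) := (Real.sinh_lt_cosh _).le

/-- Stirling's formula for `|χ(1 - x + i t)|²`, with explicit relative errors. -/
lemma exists_norm_zetaFactor_sq_eq {t x : ℝ} (ht : 1 ≤ t) (hx : 1 / 2 ≤ x) :
    ∃ δ θ : ℝ, |δ| ≤ (4 + x ^ 2) / t * (x - 1 / 2) ∧ |θ| ≤ 1 / t ∧
      ‖zetaFactor ((x : ℂ) - t * I)‖ ^ 2 =
        (t / (2 * Real.pi)) ^ (2 * x - 1) * Real.exp (2 * δ) * (1 + θ) := by
  have ht_pos : 0 < t := by linarith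
  have := Real.pi_pos
  have hcosh := Real.cosh_pos (Real.pi * t)
  have hGamma (y : ℝ) : 0 < ‖Complex.Gamma ((y : ℂ) - t * I)‖ :=
    norm_pos_iff.2 (Gamma_line_ne_zero ht_pos y)
  refine ⟨_, Real.cos (Real.pi * x) / Real.cosh (Real.pi * t), abs_log_norm_Gamma_sub_le ht hx,
    ?_, ?_⟩
  · rw [abs_div, abs_of_pos hcosh]
    exact div_le_div₀ zero_le_one (Real.abs_cos_le_one _) ht_pos (le_cosh_pi_mul ht_pos.le)
  · set δ := Real.log ‖Complex.Gamma ((x : ℂ) - t * I)‖ -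
      Real.log ‖Complex.Gamma (((1 / 2 : ℝ) : ℂ) - t * I)‖ - (x - 1 / 2) * Real.log t with hδ
    have hratio : ‖Complex.Gamma ((x : ℂ) - t * I)‖ ^ 2 =
        Real.pi / Real.cosh (Real.pi * t) * t ^ (2 * x - 1) * Real.exp (2 * δ) := by
      rw [← norm_Gamma_half_sub_sq, Real.rpow_def_of_pos ht_pos, mul_assoc, ← Real.exp_add,
        ← Real.exp_log (hGamma x), ← Real.exp_log (hGamma (1 / 2)), ← Real.exp_nat_mul,
        ← Real.exp_nat_mul, ← Real.exp_add, hδ]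
      congr 1
      push_cast
      ring
    have hpow : (2 * Real.pi) ^ (-2 * x) = ((2 * Real.pi) ^ (2 * x - 1))⁻¹ * (2 * Real.pi)⁻¹ := by
      rw [← Real.rpow_neg (by positivity), ← Real.rpow_neg_one, ← Real.rpow_add (by positivity)]
      ring_nf
    rw [norm_zetaFactor_sq, hratio, hpow, Real.div_rpow ht_pos.le (by positivity)]
    field_simp

/-! ### Derivatives through averages over circles -/

lemma norm_circleAverage_le (f : ℂ → ℂ) (c : ℂ) (R : ℝ) :
    ‖Real.circleAverage f c R‖ ≤ Real.circleAverage (fun z => ‖f z‖) c R := by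
  rw [Real.circleAverage_def, Real.circleAverage_def, norm_smul, smul_eq_mul,
    Real.norm_of_nonneg (by positivity)]
  gcongr
  exact intervalIntegral.norm_integral_le_integral_norm (by positivity)

lemma circleAverage_sq_le {u : ℂ → ℝ} {c : ℂ} {R : ℝ}
    (hu : ContinuousOn u (Metric.sphere c |R|)) :
    Real.circleAverage u c R ^ 2 ≤ Real.circleAverage (fun z => u z ^ 2) c R := by
  set A := Real.circleAverage u c R
  have hu_sq : CircleIntegrable (fun z => u z ^ 2) c R := (hu.pow 2).circleIntegrable'
  have hu_mul : CircleIntegrable (fun z => (2 * A) * u z) c R :=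
    (continuousOn_const.mul hu).circleIntegrable'
  have hmul : Real.circleAverage (fun z => (2 * A) * u z) c R = 2 * A * A :=
    Real.circleAverage_fun_smul (a := 2 * A)
  have hvariance : 0 ≤ Real.circleAverage (fun z => u z ^ 2 - (2 * A) * u z + A ^ 2) c R :=
    Real.circleAverage_nonneg_of_nonneg fun z _ => by nlinarith [sq_nonneg (u z - A)]
  rw [Real.circleAverage_fun_add (hu_sq.fun_sub hu_mul) (circleIntegrable_const _ _ _),
    Real.circleAverage_fun_sub hu_sq hu_mul, hmul, Real.circleAverage_const] at hvariance
  linarith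

lemma iteratedDeriv_eq_circleAverage {f : ℂ → ℂ} {c : ℂ} {R : ℝ} (hR : 0 < R) (n : ℕ)
    (hf : DifferentiableOn ℂ f (Metric.closedBall c R)) :
    iteratedDeriv n f c =
      n.factorial * Real.circleAverage (fun z => ((z - c) ^ n)⁻¹ * f z) c R := by
  have hcauchy := hf.circleIntegral_one_div_sub_center_pow_smul hR n
  have hintegrand : ∀ z, (z - c)⁻¹ • (((z - c) ^ n)⁻¹ * f z) = (1 / (z - c) ^ (n + 1)) • f z := by
    intro z
    rw [smul_eq_mul, smul_eq_mul, pow_succ, one_div, mul_inv]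
    ring
  simp_rw [Real.circleAverage_eq_circleIntegral hR.ne', hintegrand, hcauchy, smul_eq_mul]
  have := Real.pi_ne_zero
  have := n.factorial_ne_zero
  field_simp

lemma norm_iteratedDeriv_sq_le_circleAverage {f : ℂ → ℂ} {c : ℂ} {R : ℝ} (hR : 0 < R) (n : ℕ)
    (hf : DifferentiableOn ℂ f (Metric.closedBall c R)) :
    ‖iteratedDeriv n f c‖ ^ 2 ≤
      (n.factorial / R ^ n) ^ 2 * Real.circleAverage (fun z => ‖f z‖ ^ 2) c R := by
  have hnorm : Real.circleAverage (fun z => ‖((z - c) ^ n)⁻¹ * f z‖) c R =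
      (R ^ n)⁻¹ * Real.circleAverage (fun z => ‖f z‖) c R := by
    rw [← smul_eq_mul, ← Real.circleAverage_fun_smul]
    refine Real.circleAverage_congr_sphere fun z hz => ?_
    rw [abs_of_pos hR, mem_sphere_iff_norm] at hz
    simp only [norm_mul, norm_inv, norm_pow, hz, smul_eq_mul]
  have hsphere : Metric.sphere c |R| ⊆ Metric.closedBall c R :=
    (abs_of_pos hR).symm ▸ Metric.sphere_subset_closedBall
  have hbound := norm_circleAverage_le (fun z => ((z - c) ^ n)⁻¹ * f z) c R
  rw [hnorm] at hbound
  calc ‖iteratedDeriv n f c‖ ^ 2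
      ≤ (n.factorial * ((R ^ n)⁻¹ * Real.circleAverage (fun z => ‖f z‖) c R)) ^ 2 := by
        rw [iteratedDeriv_eq_circleAverage hR n hf, norm_mul, norm_natCast]
        gcongr
    _ = (n.factorial / R ^ n) ^ 2 * Real.circleAverage (fun z => ‖f z‖) c R ^ 2 := by ring
    _ ≤ _ := by
        gcongr
        exact circleAverage_sq_le (hf.continuousOn.mono hsphere).norm

lemma iteratedDeriv_eq_sum_cexp_mul (l : ℕ) {f : ℂ → ℂ} {z : ℂ} (hf : AnalyticAt ℂ f z) (L : ℂ) :
    iteratedDeriv l f z = ∑ i ∈ Finset.range (l + 1),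
      l.choose i * L ^ i * iteratedDeriv (l - i) (fun w => cexp (-(L * (w - z))) * f w) z := by
  have hsplit : f = (fun w => cexp (L * (w - z))) * fun w => cexp (-(L * (w - z))) * f w := by
    funext w
    rw [Pi.mul_apply, ← mul_assoc, ← exp_add, add_neg_cancel, exp_zero, one_mul]
  have hexp (i : ℕ) : iteratedDeriv i (fun w => cexp (L * (w - z))) z = L ^ i := by
    rw [iteratedDeriv_comp_sub_const i (fun s : ℂ => cexp (L * s)) z,
      iteratedDeriv_cexp_const_mul]
    simp
  have hexp_diff : ContDiff ℂ l fun w => cexp (L * (w - z)) := by fun_prop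
  have hneg_exp_diff : ContDiff ℂ l fun w => cexp (-(L * (w - z))) := by fun_prop
  conv_lhs => rw [hsplit]
  rw [iteratedDeriv_mul hexp_diff.contDiffAt (hneg_exp_diff.contDiffAt.mul hf.contDiffAt)]
  simp_rw [hexp]

/-- The constant that Cauchy's estimates on a disc of radius `R` give for the terms of Leibniz'
formula in which the second factor is differentiated. -/
noncomputable def leibnizConst (l : ℕ) (R : ℝ) : ℝ :=
  ∑ i ∈ Finset.range l, (l.choose i : ℝ) * ((l - i).factorial / R ^ (l - i))

lemma leibnizConst_nonneg (l : ℕ) {R : ℝ} (hR : 0 ≤ R) : 0 ≤ leibnizConst l R :=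
  Finset.sum_nonneg fun _ _ => by positivity

lemma norm_iteratedDeriv_sub_pow_mul_sq_le (l : ℕ) {f : ℂ → ℂ} {z : ℂ} {R L : ℝ} (hR : 0 < R)
    (hL : 1 ≤ L) (hf : DifferentiableOn ℂ f (Metric.closedBall z R)) :
    ‖iteratedDeriv l f z - (L : ℂ) ^ l * f z‖ ^ 2 ≤ (L ^ l / L * leibnizConst l R) ^ 2 *
      Real.circleAverage (fun w => ‖cexp (-(L * (w - z))) * f w‖ ^ 2) z R := by
  set g : ℂ → ℂ := fun w => cexp (-(L * (w - z))) * f w with hg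
  set J := Real.circleAverage (fun w => ‖g w‖ ^ 2) z R
  have hJ : 0 ≤ J := Real.circleAverage_nonneg_of_nonneg fun _ _ => sq_nonneg _
  have hg_diff : DifferentiableOn ℂ g (Metric.closedBall z R) :=
    DifferentiableOn.mul (by fun_prop) hf
  have hderiv (n : ℕ) : ‖iteratedDeriv n g z‖ ≤ n.factorial / R ^ n * √J := by
    rw [← pow_le_pow_iff_left₀ (by positivity) (by positivity) two_ne_zero, mul_pow,
      Real.sq_sqrt hJ]
    exact norm_iteratedDeriv_sq_le_circleAverage hR n hg_diff
  have hlower : iteratedDeriv l f z - (L : ℂ) ^ l * f z = ∑ i ∈ Finset.range l,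
      l.choose i * (L : ℂ) ^ i * iteratedDeriv (l - i) g z := by
    rw [iteratedDeriv_eq_sum_cexp_mul l (hf.analyticAt (Metric.closedBall_mem_nhds z hR)) L,
      Finset.sum_range_succ]
    simp [hg]
  rw [← Real.sq_sqrt hJ, ← mul_pow, hlower]
  gcongr
  refine (norm_sum_le _ _).trans ?_
  rw [leibnizConst, Finset.mul_sum, Finset.sum_mul]
  refine Finset.sum_le_sum fun i hi => ?_
  have hpow : L ^ i ≤ L ^ l / L := by
    rw [le_div_iff₀ (by positivity), ← pow_succ]
    exact pow_le_pow_right₀ hL (Finset.mem_range.1 hi)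
  rw [norm_mul, norm_mul, norm_pow, norm_real, Real.norm_of_nonneg (by linarith), norm_natCast]
  calc (l.choose i : ℝ) * L ^ i * ‖iteratedDeriv (l - i) g z‖
      ≤ l.choose i * (L ^ l / L) * ((l - i).factorial / R ^ (l - i) * √J) := by
        gcongr
        exact hderiv _
    _ = _ := by ring

lemma riemannZeta_one_sub_line {t : ℝ} (ht : 0 < t) (x : ℝ) :
    riemannZeta (1 - ((x : ℂ) - t * I)) =
      zetaFactor ((x : ℂ) - t * I) * riemannZeta ((x : ℂ) - t * I) :=
  riemannZeta_one_sub (line_ne_neg_natCast ht x) (line_ne_one ht x)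

lemma norm_zetaFactor_sq_le {t x x₁ : ℝ} (ht : 1 ≤ t) (hx : 1 / 2 ≤ x) (hx₁ : x ≤ x₁) :
    ‖zetaFactor ((x : ℂ) - t * I)‖ ^ 2 ≤
      (t / (2 * Real.pi)) ^ (2 * x - 1) * (2 * Real.exp (2 * ((4 + x₁ ^ 2) * x₁))) := by
  obtain ⟨δ, θ, hδ, hθ, hnorm⟩ := exists_norm_zetaFactor_sq_eq ht hx
  have hδ_le : δ ≤ (4 + x₁ ^ 2) * x₁ := by
    have hx_sq : x ^ 2 ≤ x₁ ^ 2 := by gcongr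
    calc δ ≤ (4 + x ^ 2) / t * (x - 1 / 2) := (le_abs_self δ).trans hδ
      _ ≤ (4 + x₁ ^ 2) * x₁ := by
        have : (4 + x ^ 2) / t ≤ 4 + x ^ 2 := div_le_self (by positivity) ht
        gcongr <;> linarith
  have hθ_le : 1 + θ ≤ 2 := by
    have : 1 / t ≤ 1 := (div_le_one (by linarith)).2 ht
    linarith [le_abs_self θ]
  rw [hnorm, mul_assoc, mul_comm (Real.exp _)]
  gcongr

lemma norm_cexp_neg_log_mul_sq {y : ℝ} (hy : 0 < y) (z : ℂ) :
    ‖cexp (-((Real.log y : ℝ) * z))‖ ^ 2 = y ^ (-(2 * z.re)) := by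
  rw [norm_exp, Real.rpow_def_of_pos hy, ← Real.exp_nat_mul, neg_re, re_ofReal_mul]
  push_cast
  ring_nf

lemma rpow_le_two_rpow_mul {u y p q : ℝ} (hu : 0 ≤ u) (huy : u ≤ 2 * y) (hp : 0 ≤ p)
    (hpq : p ≤ q) : u ^ p ≤ 2 ^ q * y ^ p := by
  have hy : 0 ≤ y := by linarith
  calc u ^ p ≤ (2 * y) ^ p := by gcongr
    _ = 2 ^ p * y ^ p := Real.mul_rpow two_pos.le hy
    _ ≤ 2 ^ q * y ^ p := by
        gcongr
        exact one_le_two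

lemma exists_norm_cexp_mul_zeta_one_sub_sq_le {a R : ℝ} (hR : R ≤ 1 / 2) (ha : 1 / 2 ≤ a - R) :
    ∃ C : ℝ, 0 < C ∧ ∀ t : ℝ, 2 ≤ t → ∀ w ∈ Metric.closedBall ((a : ℂ) - t * I) R,
      ‖cexp (-((Real.log (t / (2 * Real.pi)) : ℝ) * (w - ((a : ℂ) - t * I)))) *
          riemannZeta (1 - w)‖ ^ 2 ≤
        C * (t / (2 * Real.pi)) ^ (2 * a - 1) * ‖riemannZeta w‖ ^ 2 := by
  set K := 2 * Real.exp (2 * ((4 + (a + R) ^ 2) * (a + R)))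
  refine ⟨2 ^ (2 * (a + R) - 1) * K, by positivity, fun t ht w hw => ?_⟩
  rw [Metric.mem_closedBall, dist_eq_norm] at hw
  have hre := abs_le.1 ((abs_re_le_norm _).trans hw)
  have him := abs_le.1 ((abs_im_le_norm _).trans hw)
  simp only [sub_re, sub_im, mul_re, mul_im, ofReal_re, ofReal_im, I_re, I_im] at hre him
  obtain ⟨x, u, rfl⟩ : ∃ x u : ℝ, w = (x : ℂ) - u * I := ⟨w.re, -w.im, by simp⟩
  simp only [sub_re, sub_im, mul_re, mul_im, ofReal_re, ofReal_im, I_re, I_im] at hre him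
  set y := t / (2 * Real.pi)
  have hy : 0 < y := by positivity
  have hu_pow : (u / (2 * Real.pi)) ^ (2 * x - 1) ≤ 2 ^ (2 * (a + R) - 1) * y ^ (2 * x - 1) :=
    rpow_le_two_rpow_mul (div_nonneg (by linarith) (by positivity))
      (by rw [← mul_div_assoc]; gcongr; linarith) (by linarith) (by linarith)
  have hfactor := norm_zetaFactor_sq_le (t := u) (x := x) (x₁ := a + R) (by linarith) (by linarith)
    (by linarith)
  rw [riemannZeta_one_sub_line (by linarith), ← mul_assoc, norm_mul _ (riemannZeta _), mul_pow,
    norm_mul, mul_pow, norm_cexp_neg_log_mul_sq hy]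
  refine mul_le_mul_of_nonneg_right ?_ (sq_nonneg _)
  calc y ^ (-(2 * ((x : ℂ) - u * I - (a - t * I)).re)) * ‖zetaFactor ((x : ℂ) - u * I)‖ ^ 2
      ≤ y ^ (-(2 * (x - a))) * (2 ^ (2 * (a + R) - 1) * y ^ (2 * x - 1) * K) := by
        have hre_sub : ((x : ℂ) - u * I - (a - t * I)).re = x - a := by simp
        rw [hre_sub]
        gcongr
        exact hfactor.trans (by gcongr)
    _ = 2 ^ (2 * (a + R) - 1) * K * (y ^ (-(2 * (x - a))) * y ^ (2 * x - 1)) := by ring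
    _ = _ := by
        rw [← Real.rpow_add hy]
        ring_nf

/-! ### Approximation of the derivatives in mean square -/

section CircleAverage

variable {f : ℂ → ℝ} {γ : ℝ → ℂ} {R a b : ℝ}

lemma integrable_comp_circleMap_prod
    (hf : ContinuousOn (fun p : ℝ × ℝ => f (circleMap (γ p.1) R p.2))
      (Icc a b ×ˢ Icc 0 (2 * Real.pi))) :
    Integrable (Function.uncurry fun t θ => f (circleMap (γ t) R θ))
      ((volume.restrict (Ioc a b)).prod (volume.restrict (Ioc 0 (2 * Real.pi)))) := by
  rw [Measure.prod_restrict]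
  exact (hf.integrableOn_compact (isCompact_Icc.prod isCompact_Icc)).mono_set
    (prod_mono Ioc_subset_Icc_self Ioc_subset_Icc_self)

lemma circleAverage_eq_setIntegral (f : ℂ → ℝ) (c : ℂ) (R : ℝ) :
    Real.circleAverage f c R =
      (2 * Real.pi)⁻¹ * ∫ θ in Ioc 0 (2 * Real.pi), f (circleMap c R θ) := by
  rw [Real.circleAverage_def, intervalIntegral.integral_of_le Real.two_pi_pos.le, smul_eq_mul]

lemma integrableOn_circleAverage
    (hf : ContinuousOn (fun p : ℝ × ℝ => f (circleMap (γ p.1) R p.2))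
      (Icc a b ×ˢ Icc 0 (2 * Real.pi))) :
    IntegrableOn (fun t => Real.circleAverage f (γ t) R) (Ioc a b) := by
  simp_rw [circleAverage_eq_setIntegral]
  exact (integrable_comp_circleMap_prod hf).integral_prod_left.const_mul _

lemma setIntegral_circleAverage_le {B : ℝ}
    (hf : ContinuousOn (fun p : ℝ × ℝ => f (circleMap (γ p.1) R p.2))
      (Icc a b ×ˢ Icc 0 (2 * Real.pi)))
    (hB : ∀ θ, ∫ t in Ioc a b, f (circleMap (γ t) R θ) ≤ B) :
    ∫ t in Ioc a b, Real.circleAverage f (γ t) R ≤ B := by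
  have hint := integrable_comp_circleMap_prod hf
  simp_rw [circleAverage_eq_setIntegral]
  rw [integral_const_mul, integral_integral_swap hint, inv_mul_le_iff₀ Real.two_pi_pos]
  calc ∫ θ in Ioc 0 (2 * Real.pi), ∫ t in Ioc a b, f (circleMap (γ t) R θ)
      ≤ ∫ _ in Ioc 0 (2 * Real.pi), B :=
        integral_mono hint.integral_prod_right (integrable_const _) hB
    _ = 2 * Real.pi * B := by simp [Real.pi_pos.le]

end CircleAverage

lemma circleMap_line (a t R θ : ℝ) : circleMap ((a : ℂ) - t * I) R θ =
    ((a + R * Real.cos θ : ℝ) : ℂ) - ((t - R * Real.sin θ : ℝ) : ℂ) * I := by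
  rw [circleMap, exp_mul_I, ← ofReal_cos, ← ofReal_sin]
  push_cast
  ring

lemma abs_mul_cos_le {R : ℝ} (hR : 0 ≤ R) (θ : ℝ) : |R * Real.cos θ| ≤ R := by
  rw [abs_mul, abs_of_nonneg hR]
  exact mul_le_of_le_one_right hR (Real.abs_cos_le_one θ)

lemma abs_mul_sin_le {R : ℝ} (hR : 0 ≤ R) (θ : ℝ) : |R * Real.sin θ| ≤ R := by
  rw [abs_mul, abs_of_nonneg hR]
  exact mul_le_of_le_one_right hR (Real.abs_sin_le_one θ)

/-- The height `2πe` above which `log (t / 2π) ≥ 1`. -/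
noncomputable def logCutoff : ℝ := 2 * Real.pi * Real.exp 1

lemma two_le_logCutoff : 2 ≤ logCutoff := by
  have := Real.pi_gt_three
  have := Real.one_le_exp zero_le_one
  unfold logCutoff
  nlinarith

lemma one_le_log_div_two_pi {t : ℝ} (ht : logCutoff ≤ t) : 1 ≤ Real.log (t / (2 * Real.pi)) := by
  have hexp : Real.exp 1 ≤ t / (2 * Real.pi) := by
    rwa [le_div_iff₀' Real.two_pi_pos]
  exact (Real.le_log_iff_exp_le ((Real.exp_pos 1).trans_le hexp)).2 hexp

lemma continuousOn_norm_zeta_circleMap_sq {a R b T : ℝ} (hR : 0 ≤ R) (hb : R < b) :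
    ContinuousOn (fun p : ℝ × ℝ => ‖riemannZeta (circleMap ((a : ℂ) - p.1 * I) R p.2)‖ ^ 2)
      (Icc b T ×ˢ Icc 0 (2 * Real.pi)) := by
  have hcircle : Continuous fun p : ℝ × ℝ => circleMap ((a : ℂ) - p.1 * I) R p.2 := by
    unfold circleMap
    fun_prop
  intro p hp
  have hpole : circleMap ((a : ℂ) - p.1 * I) R p.2 ≠ 1 := by
    rw [circleMap_line]
    refine line_ne_one ?_ _
    linarith [(abs_le.1 (abs_mul_sin_le hR p.2)).2, (mem_prod.1 hp).1.1]
  have hzeta : ContinuousAt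
      (fun p : ℝ × ℝ => riemannZeta (circleMap ((a : ℂ) - p.1 * I) R p.2)) p :=
    (differentiableAt_riemannZeta hpole).continuousAt.comp
      (f := fun p : ℝ × ℝ => circleMap ((a : ℂ) - p.1 * I) R p.2) hcircle.continuousAt
  exact (hzeta.norm.pow 2).continuousWithinAt

lemma setIntegral_norm_zeta_circleMap_sq_le {a R b T θ : ℝ} (hR : 0 ≤ R) (hb : R + 1 ≤ b)
    (hbT : b ≤ T) :
    ∫ t in Ioc b T, ‖riemannZeta (circleMap ((a : ℂ) - t * I) R θ)‖ ^ 2 ≤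
      ∫ u in Ioc 1 (T + R), ‖riemannZeta (((a + R * Real.cos θ : ℝ) : ℂ) - u * I)‖ ^ 2 := by
  have hsin := abs_le.1 (abs_mul_sin_le hR θ)
  simp_rw [circleMap_line]
  rw [← intervalIntegral.integral_of_le hbT, intervalIntegral.integral_comp_sub_right
      (fun u : ℝ => ‖riemannZeta (((a + R * Real.cos θ : ℝ) : ℂ) - (u : ℂ) * I)‖ ^ 2),
    intervalIntegral.integral_of_le (by linarith)]
  refine setIntegral_mono_set ?_ (ae_of_all _ fun _ => by positivity)
    (Ioc_subset_Ioc (by linarith) (by linarith)).eventuallyLE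
  have hcont := (((continuousOn_zeta_line (a + R * Real.cos θ)).mono
    fun t (ht : t ∈ Icc 1 (T + R)) => one_pos.trans_le ht.1).norm).pow 2
  exact hcont.integrableOn_Icc.mono_set Ioc_subset_Icc_self

lemma exists_setIntegral_circleAverage_norm_zeta_sq_le {a R b : ℝ} (hR : 0 ≤ R)
    (ha : 1 / 2 < a - R) (hb : R + 1 ≤ b) :
    ∃ C : ℝ, 0 < C ∧ ∀ T : ℝ, b ≤ T →
      ∫ t in Ioc b T, Real.circleAverage (fun w => ‖riemannZeta w‖ ^ 2) ((a : ℂ) - t * I) R ≤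
        C * T := by
  obtain ⟨C, hC, hmean⟩ := exists_setIntegral_norm_zeta_sq_le ha (a + R)
  refine ⟨C * 2, by positivity, fun T hT => ?_⟩
  refine setIntegral_circleAverage_le
    (continuousOn_norm_zeta_circleMap_sq hR (by linarith)) fun θ => ?_
  have hcos := abs_le.1 (abs_mul_cos_le hR θ)
  calc ∫ t in Ioc b T, ‖riemannZeta (circleMap ((a : ℂ) - t * I) R θ)‖ ^ 2
      ≤ ∫ u in Ioc 1 (T + R), ‖riemannZeta (((a + R * Real.cos θ : ℝ) : ℂ) - u * I)‖ ^ 2 :=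
        setIntegral_norm_zeta_circleMap_sq_le hR hb hT
    _ ≤ C * (T + R) := hmean _ ⟨by linarith, by linarith⟩ _ (by linarith)
    _ ≤ C * 2 * T := by nlinarith

lemma im_neg_of_mem_closedBall_line {a t R : ℝ} (ht : R < t) {w : ℂ}
    (hw : w ∈ Metric.closedBall ((a : ℂ) - t * I) R) : w.im < 0 := by
  have him := (abs_le.1 ((abs_im_le_norm _).trans (mem_closedBall_iff_norm.1 hw))).2
  simp only [sub_im, mul_im, ofReal_re, ofReal_im, I_re, I_im] at him
  linarith

lemma differentiableOn_zeta_one_sub {a t R : ℝ} (ht : R < t) :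
    DifferentiableOn ℂ (fun w => riemannZeta (1 - w)) (Metric.closedBall ((a : ℂ) - t * I) R) := by
  intro w hw
  have hpole : (1 : ℂ) - w ≠ 1 := fun h => by
    simpa [sub_eq_self.1 h] using im_neg_of_mem_closedBall_line ht hw
  exact ((differentiableAt_riemannZeta hpole).comp w
    ((differentiableAt_const _).sub differentiableAt_id)).differentiableWithinAt

lemma exists_norm_iteratedDeriv_zeta_sub_sq_le (l : ℕ) {a R : ℝ} (hR : 0 < R) (hR_half : R ≤ 1 / 2)
    (ha : 1 / 2 ≤ a - R) :
    ∃ C : ℝ, 0 < C ∧ ∀ t : ℝ, logCutoff ≤ t →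
      ‖iteratedDeriv l (fun w => riemannZeta (1 - w)) ((a : ℂ) - t * I)
          - (Real.log (t / (2 * Real.pi)) : ℂ) ^ l * riemannZeta (1 - ((a : ℂ) - t * I))‖ ^ 2 ≤
        (Real.log (t / (2 * Real.pi)) ^ l / Real.log (t / (2 * Real.pi)) * leibnizConst l R) ^ 2 *
          (C * (t / (2 * Real.pi)) ^ (2 * a - 1) *
            Real.circleAverage (fun w => ‖riemannZeta w‖ ^ 2) ((a : ℂ) - t * I) R) := by
  obtain ⟨C, hC, hcircle⟩ := exists_norm_cexp_mul_zeta_one_sub_sq_le hR_half ha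
  refine ⟨C, hC, fun t ht => ?_⟩
  have ht_two := two_le_logCutoff.trans ht
  set z := (a : ℂ) - t * I
  set L := Real.log (t / (2 * Real.pi))
  have hdiff := differentiableOn_zeta_one_sub (a := a) (by linarith : R < t)
  have hsphere : Metric.sphere z |R| ⊆ Metric.closedBall z R :=
    (abs_of_pos hR).symm ▸ Metric.sphere_subset_closedBall
  have hzeta : ContinuousOn riemannZeta (Metric.sphere z |R|) := fun w hw => by
    have him := im_neg_of_mem_closedBall_line (by linarith) (hsphere hw)
    refine (differentiableAt_riemannZeta ?_).continuousAt.continuousWithinAt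
    rintro rfl
    simp at him
  refine (norm_iteratedDeriv_sub_pow_mul_sq_le l hR (one_le_log_div_two_pi ht) hdiff).trans ?_
  gcongr
  rw [← smul_eq_mul (C * _), ← Real.circleAverage_fun_smul]
  have hexp : ContinuousOn (fun w => cexp (-(L * (w - z))) * riemannZeta (1 - w))
      (Metric.sphere z |R|) := ContinuousOn.mul (by fun_prop) (hdiff.continuousOn.mono hsphere)
  have hbound : ContinuousOn
      (fun w => (C * (t / (2 * Real.pi)) ^ (2 * a - 1)) • ‖riemannZeta w‖ ^ 2)
      (Metric.sphere z |R|) := continuousOn_const.mul (hzeta.norm.pow 2)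
  exact Real.circleAverage_mono (hexp.norm.pow 2).circleIntegrable' hbound.circleIntegrable'
    fun w hw => hcircle t ht_two w (hsphere hw)

lemma pow_div_self_mul_leibnizConst_le (l : ℕ) {R x y : ℝ} (hR : 0 ≤ R) (hx : 0 < x) (hxy : x ≤ y) :
    x ^ l / x * leibnizConst l R ≤ y ^ l / y * leibnizConst l R := by
  cases l with
  | zero => simp [leibnizConst]
  | succ l =>
    have := leibnizConst_nonneg (l + 1) hR
    rw [pow_succ, pow_succ, mul_div_cancel_right₀ _ hx.ne',
      mul_div_cancel_right₀ _ (hx.trans_le hxy).ne']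
    gcongr

lemma exists_norm_iteratedDeriv_zeta_sub_sq_le_of_le (l : ℕ) {a R : ℝ} (hR : 0 < R)
    (hR_half : R ≤ 1 / 2) (ha : 1 / 2 ≤ a - R) :
    ∃ C : ℝ, 0 < C ∧ ∀ t T : ℝ, logCutoff ≤ t → t ≤ T →
      ‖iteratedDeriv l (fun w => riemannZeta (1 - w)) ((a : ℂ) - t * I)
          - (Real.log (t / (2 * Real.pi)) : ℂ) ^ l * riemannZeta (1 - ((a : ℂ) - t * I))‖ ^ 2 ≤
        C * (T ^ (2 * a - 1) *
            (Real.log (T / (2 * Real.pi)) ^ l / Real.log (T / (2 * Real.pi))) ^ 2) *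
          Real.circleAverage (fun w => ‖riemannZeta w‖ ^ 2) ((a : ℂ) - t * I) R := by
  obtain ⟨C, hC, hpointwise⟩ := exists_norm_iteratedDeriv_zeta_sub_sq_le l hR hR_half ha
  refine ⟨(leibnizConst l R ^ 2 + 1) * C, by positivity, fun t T ht htT => ?_⟩
  set J := Real.circleAverage (fun w => ‖riemannZeta w‖ ^ 2) ((a : ℂ) - t * I) R
  set L := fun t : ℝ => Real.log (t / (2 * Real.pi))
  have hJ : 0 ≤ J := Real.circleAverage_nonneg_of_nonneg fun _ _ => sq_nonneg _
  have ht_pos : 0 < t := by linarith [two_le_logCutoff]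
  have hT_pos : 0 < T := ht_pos.trans_le htT
  have hL : 0 < L t := one_pos.trans_le (one_le_log_div_two_pi ht)
  have hL_le : L t ≤ L T := Real.log_le_log (by positivity) (by gcongr)
  have ht_div : t / (2 * Real.pi) ≤ T :=
    (div_le_self ht_pos.le (by linarith [Real.pi_gt_three])).trans htT
  have hL_pow := pow_div_self_mul_leibnizConst_le l hR.le hL hL_le
  have hconst := leibnizConst_nonneg l hR.le
  calc _ ≤ (L t ^ l / L t * leibnizConst l R) ^ 2 *
          (C * (t / (2 * Real.pi)) ^ (2 * a - 1) * J) := hpointwise t ht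
    _ ≤ (L T ^ l / L T * leibnizConst l R) ^ 2 * (C * T ^ (2 * a - 1) * J) := by
        gcongr
        linarith
    _ = leibnizConst l R ^ 2 * C * (T ^ (2 * a - 1) * (L T ^ l / L T) ^ 2) * J := by ring
    _ ≤ _ := by
        gcongr
        linarith

lemma exists_setIntegral_norm_iteratedDeriv_zeta_sub_sq_le {a : ℝ} (ha : 1 / 2 < a) (l : ℕ) :
    ∃ C : ℝ, 0 < C ∧ ∀ T : ℝ, logCutoff ≤ T →
      ∫ t in Ioc logCutoff T, ‖iteratedDeriv l (fun w => riemannZeta (1 - w)) ((a : ℂ) - t * I)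
          - (Real.log (t / (2 * Real.pi)) : ℂ) ^ l * riemannZeta (1 - ((a : ℂ) - t * I))‖ ^ 2 ≤
        C * (T ^ (2 * a) *
          (Real.log (T / (2 * Real.pi)) ^ l / Real.log (T / (2 * Real.pi))) ^ 2) := by
  obtain ⟨R, hR, hR_lt⟩ := exists_between (lt_min (by norm_num) (sub_pos.2 ha) :
    (0 : ℝ) < min (1 / 2) (a - 1 / 2))
  obtain ⟨hR_half, haR⟩ := lt_min_iff.1 hR_lt
  have hcutoff := two_le_logCutoff
  obtain ⟨C₁, hC₁, hpointwise⟩ :=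
    exists_norm_iteratedDeriv_zeta_sub_sq_le_of_le (a := a) l hR hR_half.le (by linarith)
  obtain ⟨C₂, hC₂, hcircle⟩ := exists_setIntegral_circleAverage_norm_zeta_sq_le (a := a) hR.le
    (by linarith) (by linarith : R + 1 ≤ logCutoff)
  refine ⟨C₁ * C₂, by positivity, fun T hT => ?_⟩
  have hT_pos : 0 < T := by linarith
  set B := C₁ * (T ^ (2 * a - 1) *
    (Real.log (T / (2 * Real.pi)) ^ l / Real.log (T / (2 * Real.pi))) ^ 2) with hB
  set J := fun t : ℝ => Real.circleAverage (fun w => ‖riemannZeta w‖ ^ 2) ((a : ℂ) - t * I) R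
  have hJ_int : IntegrableOn J (Ioc logCutoff T) :=
    integrableOn_circleAverage (continuousOn_norm_zeta_circleMap_sq hR.le (by linarith))
  calc _ ≤ ∫ t in Ioc logCutoff T, B * J t := by
        refine integral_mono_of_nonneg (ae_of_all _ fun _ => sq_nonneg _) (hJ_int.const_mul B) ?_
        exact (ae_restrict_iff' measurableSet_Ioc).2
          (ae_of_all _ fun t ht => hpointwise t T ht.1.le ht.2)
    _ ≤ B * (C₂ * T) := by
        rw [integral_const_mul]
        exact mul_le_mul_of_nonneg_left (hcircle T hT) (by positivity)
    _ = _ := by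
        rw [hB, show 2 * a = 2 * a - 1 + 1 by ring, Real.rpow_add_one hT_pos.ne']
        ring_nf

/-! ### Integrals of asymptotically equivalent functions -/

lemma isLittleO_setIntegral_Ioc {E : Type*} [NormedAddCommGroup E] [NormedSpace ℝ E]
    {f : ℝ → E} {g : ℝ → ℝ} {a : ℝ} (hf : ∀ T, IntegrableOn f (Ioc a T))
    (hg : ∀ T, IntegrableOn g (Ioc a T)) (hg_nonneg : ∀ t ∈ Ioi a, 0 ≤ g t) (hfg : f =o[atTop] g)
    (htop : Tendsto (fun T => ∫ t in Ioc a T, g t) atTop atTop) :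
    (fun T => ∫ t in Ioc a T, f t) =o[atTop] fun T => ∫ t in Ioc a T, g t := by
  refine isLittleO_iff.2 fun ε hε => ?_
  obtain ⟨S, hS⟩ := eventually_atTop.1
    ((isLittleO_iff.1 hfg (half_pos hε)).and (eventually_gt_atTop a))
  have haS : a < S := (hS S le_rfl).2
  filter_upwards [htop.eventually_ge_atTop (2 * ‖∫ t in Ioc a S, f t‖ / ε),
    eventually_ge_atTop S] with T hlarge hST
  have hsub : Ioc S T ⊆ Ioc a T := Ioc_subset_Ioc_left haS.le
  have hg_ae : 0 ≤ᵐ[volume.restrict (Ioc a T)] g :=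
    (ae_restrict_iff' measurableSet_Ioc).2 (ae_of_all _ fun t ht => hg_nonneg t ht.1)
  have htail : ‖∫ t in Ioc S T, f t‖ ≤ ε / 2 * ∫ t in Ioc a T, g t := by
    rw [← integral_const_mul]
    refine (norm_integral_le_of_norm_le (((hg T).mono_set hsub).const_mul (ε / 2)) ?_).trans
      (setIntegral_mono_set ((hg T).const_mul _) ?_ hsub.eventuallyLE)
    · refine (ae_restrict_iff' measurableSet_Ioc).2 (ae_of_all _ fun t ht => ?_)
      simpa only [Real.norm_of_nonneg (hg_nonneg t (hsub ht).1)] using (hS t ht.1.le).1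
    · filter_upwards [hg_ae] with t ht using mul_nonneg (half_pos hε).le ht
  rw [← Ioc_union_Ioc_eq_Ioc haS.le hST, setIntegral_union (Ioc_disjoint_Ioc_of_le le_rfl)
    measurableSet_Ioc (hf S) ((hf T).mono_set hsub), Ioc_union_Ioc_eq_Ioc haS.le hST,
    Real.norm_of_nonneg (integral_nonneg_of_ae hg_ae)]
  rw [div_le_iff₀ hε] at hlarge
  linarith [norm_add_le (∫ t in Ioc a S, f t) (∫ t in Ioc S T, f t)]

lemma isEquivalent_setIntegral_Ioc {f g : ℝ → ℝ} {a : ℝ} (hf : ∀ T, IntegrableOn f (Ioc a T))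
    (hg : ∀ T, IntegrableOn g (Ioc a T)) (hg_nonneg : ∀ t ∈ Ioi a, 0 ≤ g t) (hfg : f ~[atTop] g)
    (htop : Tendsto (fun T => ∫ t in Ioc a T, g t) atTop atTop) :
    (fun T => ∫ t in Ioc a T, f t) ~[atTop] fun T => ∫ t in Ioc a T, g t := by
  have hsub := isLittleO_setIntegral_Ioc (fun T => (hf T).sub (hg T)) hg hg_nonneg hfg htop
  refine hsub.congr_left fun T => ?_
  simp only [Pi.sub_apply]
  exact integral_sub (hf T) (hg T)

lemma tendsto_setIntegral_Ioc_div {f g : ℝ → ℝ} {a c : ℝ} (hf : ∀ T, IntegrableOn f (Ioc a T))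
    (hg : ∀ T, IntegrableOn g (Ioc a T)) (hg_pos : ∀ t ∈ Ioi a, 0 < g t)
    (hfg : Tendsto (fun t => f t / g t) atTop (𝓝 c))
    (htop : Tendsto (fun T => ∫ t in Ioc a T, g t) atTop atTop) :
    Tendsto (fun T => (∫ t in Ioc a T, f t) / ∫ t in Ioc a T, g t) atTop (𝓝 c) := by
  have hg_ne : ∀ᶠ t in atTop, g t ≠ 0 := (eventually_gt_atTop a).mono fun t ht => (hg_pos t ht).ne'
  have hlittle : (fun t => f t - c * g t) =o[atTop] g := by
    refine (isLittleO_iff_tendsto' (hg_ne.mono fun t ht h => absurd h ht)).2 ?_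
    refine (sub_self c ▸ hfg.sub_const c).congr' ?_
    filter_upwards [hg_ne] with t ht using by field_simp
  have hint := (isLittleO_setIntegral_Ioc (fun T => (hf T).sub ((hg T).const_mul c)) hg
    (fun t ht => (hg_pos t ht).le) hlittle htop).tendsto_div_nhds_zero
  refine (zero_add c ▸ hint.add_const c).congr' ?_
  filter_upwards [htop.eventually_gt_atTop 0] with T hT
  have hsub := integral_sub (hf T) ((hg T).const_mul c)
  rw [integral_const_mul] at hsub
  simp only [Pi.sub_apply, hsub]
  field_simp
  ring

lemma setIntegral_mul_eq_sub_setIntegral_primitive {f g g' : ℝ → ℝ} {a T : ℝ} (haT : a ≤ T)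
    (hf : ContinuousOn f (Icc a T)) (hg : ∀ t ∈ Icc a T, HasDerivAt g (g' t) t)
    (hg' : ContinuousOn g' (Icc a T)) :
    ∫ t in Ioc a T, f t * g t =
      (∫ t in Ioc a T, f t) * g T - ∫ t in Ioc a T, (∫ s in Ioc a t, f s) * g' t := by
  have hprim : ∫ t in Ioc a T, (∫ s in Ioc a t, f s) * g' t =
      ∫ t in a..T, (∫ s in a..t, f s) * g' t := by
    rw [intervalIntegral.integral_of_le haT]
    exact setIntegral_congr_fun measurableSet_Ioc fun t ht => by
      simp only [intervalIntegral.integral_of_le ht.1.le]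
  rw [hprim, ← intervalIntegral.integral_of_le haT, ← intervalIntegral.integral_of_le haT]
  rw [← uIcc_of_le haT] at hf hg hg'
  rw [intervalIntegral.integral_mul_deriv_eq_deriv_mul_of_hasDerivAt
    (intervalIntegral.continuousOn_primitive_interval (hf.integrableOn_compact isCompact_uIcc))
    (fun t ht => (hg t ht).continuousAt.continuousWithinAt) (fun t ht => ?_)
    (fun t ht => hg t (Ioo_subset_Icc_self ht)) hf.intervalIntegrable hg'.intervalIntegrable]
  · simp
  · have hmem := Icc_mem_nhds ht.1 ht.2
    refine intervalIntegral.integral_hasDerivAt_right (hf.mono ?_).intervalIntegrable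
      ((hf.stronglyMeasurableAtFilter_nhdsWithin measurableSet_uIcc t).filter_mono
        (nhdsWithin_eq_nhds.2 hmem).ge) (hf.continuousAt hmem)
    exact uIcc_subset_uIcc_left (Ioo_subset_Icc_self ht)

lemma continuousOn_setIntegral_Ioc {f : ℝ → ℝ} {a : ℝ} (hf : ContinuousOn f (Ici a)) :
    ContinuousOn (fun T => ∫ t in Ioc a T, f t) (Ici a) := fun T hT => by
  have hprim := (intervalIntegral.continuousOn_primitive (a := a) (b := T + 1) (μ := volume)
    (hf.mono Icc_subset_Ici_self).integrableOn_Icc) T ⟨hT, by linarith⟩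
  refine hprim.mono_of_mem_nhdsWithin ?_
  filter_upwards [self_mem_nhdsWithin, nhdsWithin_le_nhds (Iic_mem_nhds (lt_add_one T))] with t h h'
    using ⟨h, h'⟩

lemma tendsto_mul_atTop_of_deriv_nonneg {g g' : ℝ → ℝ} {a : ℝ}
    (hg : ∀ t ∈ Ici a, HasDerivAt g (g' t) t) (hg'_nonneg : ∀ t ∈ Ici a, 0 ≤ g' t)
    (hga : 0 < g a) : Tendsto (fun T => T * g T) atTop atTop := by
  have hmono : MonotoneOn g (Ici a) := by
    refine monotoneOn_of_deriv_nonneg (convex_Ici a)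
      (fun t ht => (hg t ht).continuousAt.continuousWithinAt)
      (fun t ht => (hg t (interior_subset ht)).differentiableAt.differentiableWithinAt)
      fun t ht => ?_
    rw [(hg t (interior_subset ht)).deriv]
    exact hg'_nonneg t (interior_subset ht)
  refine tendsto_atTop_mono' _ ?_ (tendsto_id.atTop_mul_const hga)
  filter_upwards [eventually_ge_atTop a, eventually_ge_atTop 0] with T hT hT_nonneg
  exact mul_le_mul_of_nonneg_left (hmono self_mem_Ici hT hT) hT_nonneg

lemma setIntegral_add_mul_deriv {g g' : ℝ → ℝ} {a T : ℝ} (haT : a ≤ T)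
    (hg : ∀ t ∈ Icc a T, HasDerivAt g (g' t) t) (hg' : ContinuousOn g' (Icc a T)) :
    ∫ t in Ioc a T, (g t + t * g' t) = T * g T - a * g a := by
  have hg_cont : ContinuousOn g (Icc a T) := fun t ht => (hg t ht).continuousAt.continuousWithinAt
  rw [← uIcc_of_le haT] at hg hg' hg_cont
  rw [← intervalIntegral.integral_of_le haT,
    intervalIntegral.integral_eq_sub_of_hasDerivAt (f := fun t => t * g t)
      (f' := fun t => g t + t * g' t)
      (fun t ht => ((hasDerivAt_id t).mul (hg t ht)).congr_deriv (by simp))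
      (hg_cont.add (continuousOn_id.mul hg')).intervalIntegrable]

lemma integrableOn_Ioc_of_continuousOn_Ici {f : ℝ → ℝ} {a : ℝ} (hf : ContinuousOn f (Ici a))
    (T : ℝ) : IntegrableOn f (Ioc a T) :=
  (hf.mono Icc_subset_Ici_self).integrableOn_Icc.mono_set Ioc_subset_Icc_self

lemma tendsto_setIntegral_mul_deriv_div {u g g' : ℝ → ℝ} {a c p : ℝ} (ha : 0 ≤ a) (hp : 0 ≤ p)
    (hu : ContinuousOn u (Ici a)) (hg : ∀ t ∈ Ici a, HasDerivAt g (g' t) t)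
    (hg' : ContinuousOn g' (Ici a)) (hg_pos : ∀ t ∈ Ici a, 0 < g t)
    (hg'_nonneg : ∀ t ∈ Ici a, 0 ≤ g' t)
    (hindex : Tendsto (fun t => t * g' t / g t) atTop (𝓝 p))
    (hlinear : Tendsto (fun t => u t / t) atTop (𝓝 c)) :
    Tendsto (fun T => (∫ t in Ioc a T, u t * g' t) / (T * g T)) atTop
      (𝓝 (c * p / (1 + p))) := by
  have hg_cont : ContinuousOn g (Ici a) := fun t ht => (hg t ht).continuousAt.continuousWithinAt
  have hTg := tendsto_mul_atTop_of_deriv_nonneg hg hg'_nonneg (hg_pos a self_mem_Ici)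
  have hderiv_int : (fun T => T * g T + -(a * g a)) =ᶠ[atTop]
      fun T => ∫ t in Ioc a T, (g t + t * g' t) := by
    filter_upwards [eventually_ge_atTop a] with T hT
    rw [setIntegral_add_mul_deriv hT (fun t ht => hg t ht.1) (hg'.mono Icc_subset_Ici_self),
      sub_eq_add_neg]
  have hderiv_top := (tendsto_atTop_add_const_right _ (-(a * g a)) hTg).congr' hderiv_int
  have hratio : Tendsto (fun t => u t * g' t / (g t + t * g' t)) atTop (𝓝 (c * p / (1 + p))) := by
    refine ((hlinear.mul hindex).div (hindex.const_add 1) (by positivity)).congr' ?_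
    filter_upwards [eventually_ge_atTop a, eventually_gt_atTop 0] with t ht ht_pos
    have := hg_pos t ht
    simp only [Pi.div_apply]
    field_simp
  have hquot := tendsto_setIntegral_Ioc_div
    (integrableOn_Ioc_of_continuousOn_Ici (f := fun t => u t * g' t) (hu.mul hg'))
    (integrableOn_Ioc_of_continuousOn_Ici (hg_cont.add (continuousOn_id.mul hg')))
    (fun t ht => add_pos_of_pos_of_nonneg (hg_pos t (Ioi_subset_Ici_self ht))
      (mul_nonneg (ha.trans (le_of_lt ht)) (hg'_nonneg t (Ioi_subset_Ici_self ht)))) hratio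
    hderiv_top
  have hnorm : Tendsto (fun T => (T * g T + -(a * g a)) / (T * g T)) atTop (𝓝 (1 + 0)) := by
    refine ((hTg.const_div_atTop (-(a * g a))).const_add 1).congr' ?_
    filter_upwards [hTg.eventually_gt_atTop 0] with T hT
    rw [add_div, div_self hT.ne']
  have hprod := hquot.mul hnorm
  rw [add_zero, mul_one] at hprod
  refine hprod.congr' ?_
  filter_upwards [hderiv_int, hderiv_top.eventually_gt_atTop 0] with T hT hT_pos
  rw [hT]
  exact div_mul_div_cancel₀ hT_pos.ne'

/-- Abel summation against a weight of regular variation of index `p`. -/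
lemma tendsto_setIntegral_mul_div {f g g' : ℝ → ℝ} {a c p : ℝ} (ha : 0 ≤ a)
    (hf : ContinuousOn f (Ici a)) (hg : ∀ t ∈ Ici a, HasDerivAt g (g' t) t)
    (hg' : ContinuousOn g' (Ici a)) (hg_pos : ∀ t ∈ Ici a, 0 < g t)
    (hg'_nonneg : ∀ t ∈ Ici a, 0 ≤ g' t)
    (hindex : Tendsto (fun t => t * g' t / g t) atTop (𝓝 p))
    (hmean : Tendsto (fun T => (∫ t in Ioc a T, f t) / T) atTop (𝓝 c)) :
    Tendsto (fun T => (∫ t in Ioc a T, f t * g t) / (T * g T)) atTop (𝓝 (c / (p + 1))) := by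
  have hp : 0 ≤ p := ge_of_tendsto hindex <| by
    filter_upwards [eventually_ge_atTop a] with t ht
    exact div_nonneg (mul_nonneg (ha.trans ht) (hg'_nonneg t ht)) (hg_pos t ht).le
  have hlim : c - c * p / (1 + p) = c / (p + 1) := by field_simp; ring
  refine (hlim ▸ hmean.sub (tendsto_setIntegral_mul_deriv_div ha hp
    (continuousOn_setIntegral_Ioc hf) hg hg' hg_pos hg'_nonneg hindex hmean)).congr' ?_
  filter_upwards [eventually_ge_atTop a] with T hT
  rw [setIntegral_mul_eq_sub_setIntegral_primitive hT (hf.mono Icc_subset_Ici_self)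
    (fun t ht => hg t ht.1) (hg'.mono Icc_subset_Ici_self), sub_div,
    mul_div_mul_right _ _ (hg_pos T hT).ne']

/-! ### The second moment of the leading term -/

/-- The weight `(t / 2π)^p log(t / 2π)^n`, of regular variation of index `p`, to which
`|log(t / 2π)^l ζ(1 - z)|²` and the second moment of `ζ^{(l)}` are compared. -/
noncomputable def momentWeight (p : ℝ) (n : ℕ) (t : ℝ) : ℝ :=
  (t / (2 * Real.pi)) ^ p * Real.log (t / (2 * Real.pi)) ^ n

lemma logCutoff_pos : 0 < logCutoff := zero_lt_two.trans_le two_le_logCutoff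

lemma momentWeight_pos (p : ℝ) (n : ℕ) {t : ℝ} (ht : logCutoff ≤ t) : 0 < momentWeight p n t := by
  have ht_pos := logCutoff_pos.trans_le ht
  have hlog_pos := zero_lt_one.trans_le (one_le_log_div_two_pi ht)
  have := Real.pi_pos
  unfold momentWeight
  positivity

lemma one_le_momentWeight {p : ℝ} (hp : 0 ≤ p) (n : ℕ) {t : ℝ} (ht : logCutoff ≤ t) :
    1 ≤ momentWeight p n t := by
  have hlog := one_le_log_div_two_pi ht
  have hbase : 1 ≤ t / (2 * Real.pi) := by
    refine (Real.one_le_exp zero_le_one).trans ?_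
    exact (Real.le_log_iff_exp_le (div_pos (logCutoff_pos.trans_le ht) Real.two_pi_pos)).1 hlog
  exact one_le_mul_of_one_le_of_one_le (Real.one_le_rpow hbase hp) (one_le_pow₀ hlog)

lemma tendsto_mul_momentWeight_atTop {p : ℝ} (hp : 0 ≤ p) (n : ℕ) :
    Tendsto (fun T => T * momentWeight p n T) atTop atTop := by
  refine tendsto_atTop_mono' _ ?_ tendsto_id
  filter_upwards [eventually_ge_atTop logCutoff] with T hT
  exact le_mul_of_one_le_right (logCutoff_pos.le.trans hT) (one_le_momentWeight hp n hT)

lemma hasDerivAt_momentWeight (p : ℝ) (n : ℕ) {t : ℝ} (ht : logCutoff ≤ t) :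
    HasDerivAt (momentWeight p n)
      (momentWeight p n t * (p + n / Real.log (t / (2 * Real.pi))) / t) t := by
  have ht_pos := logCutoff_pos.trans_le ht
  have hlog_pos := zero_lt_one.trans_le (one_le_log_div_two_pi ht)
  have := Real.pi_pos
  have hbase_pos : 0 < t / (2 * Real.pi) := by positivity
  have hbase := (hasDerivAt_id t).div_const (2 * Real.pi)
  refine ((hbase.rpow_const (p := p) (.inl hbase_pos.ne')).mul
    ((hbase.log hbase_pos.ne').pow n)).congr_deriv ?_
  simp only [momentWeight, Pi.pow_apply, id, Real.rpow_sub_one hbase_pos.ne']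
  generalize Real.log (t / (2 * Real.pi)) = L at hlog_pos
  rcases n with _ | n
  · simp
    field_simp
  · push_cast
    field_simp
    ring

lemma continuousOn_momentWeight (p : ℝ) (n : ℕ) : ContinuousOn (momentWeight p n) (Ici logCutoff) :=
  fun _ ht => (hasDerivAt_momentWeight p n ht).continuousAt.continuousWithinAt

lemma tendsto_log_div_two_pi : Tendsto (fun t : ℝ => Real.log (t / (2 * Real.pi))) atTop atTop :=
  Real.tendsto_log_atTop.comp (tendsto_id.atTop_div_const Real.two_pi_pos)

lemma tendsto_setIntegral_mul_momentWeight_div {f : ℝ → ℝ} {c p : ℝ} (hp : 0 ≤ p) (n : ℕ)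
    (hf : ContinuousOn f (Ici logCutoff))
    (hmean : Tendsto (fun T => (∫ t in Ioc logCutoff T, f t) / T) atTop (𝓝 c)) :
    Tendsto (fun T => (∫ t in Ioc logCutoff T, f t * momentWeight p n t) /
      (T * momentWeight p n T)) atTop (𝓝 (c / (p + 1))) := by
  have ht_pos {t : ℝ} (ht : t ∈ Ici logCutoff) : 0 < t := logCutoff_pos.trans_le ht
  have hlog_pos {t : ℝ} (ht : t ∈ Ici logCutoff) : 0 < Real.log (t / (2 * Real.pi)) :=
    zero_lt_one.trans_le (one_le_log_div_two_pi ht)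
  refine tendsto_setIntegral_mul_div logCutoff_pos.le hf
    (fun t ht => hasDerivAt_momentWeight p n ht) ?_ (fun t ht => momentWeight_pos p n ht)
    (fun t ht => ?_) ?_ hmean
  · have hlog : ContinuousOn (fun t => Real.log (t / (2 * Real.pi))) (Ici logCutoff) :=
      (continuousOn_id.div_const _).log fun t ht => (div_pos (ht_pos ht) Real.two_pi_pos).ne'
    exact ((continuousOn_momentWeight p n).mul (continuousOn_const.add
      (continuousOn_const.div hlog fun t ht => (hlog_pos ht).ne'))).div continuousOn_id
        fun t ht => (ht_pos ht).ne'
  · have := momentWeight_pos p n ht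
    have := hlog_pos ht
    have := ht_pos ht
    positivity
  · have hlim := (tendsto_log_div_two_pi.const_div_atTop (n : ℝ)).const_add p
    rw [add_zero] at hlim
    refine hlim.congr' ?_
    filter_upwards [eventually_ge_atTop logCutoff] with t ht
    rw [mul_div_cancel₀ _ (ht_pos ht).ne', mul_div_cancel_left₀ _ (momentWeight_pos p n ht).ne']

lemma isEquivalent_norm_zetaFactor_sq {x : ℝ} (hx : 1 / 2 ≤ x) :
    (fun t : ℝ => ‖zetaFactor ((x : ℂ) - t * I)‖ ^ 2) ~[atTop]
      fun t => (t / (2 * Real.pi)) ^ (2 * x - 1) := by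
  have hexists : ∀ t : ℝ, ∃ δ θ : ℝ, 1 ≤ t → |δ| ≤ (4 + x ^ 2) / t * (x - 1 / 2) ∧ |θ| ≤ 1 / t ∧
      ‖zetaFactor ((x : ℂ) - t * I)‖ ^ 2 =
        (t / (2 * Real.pi)) ^ (2 * x - 1) * Real.exp (2 * δ) * (1 + θ) := fun t => by
    by_cases ht : 1 ≤ t
    · simpa only [ht, forall_const] using exists_norm_zetaFactor_sq_eq ht hx
    · exact ⟨0, 0, fun h => absurd h ht⟩
  choose δ θ hδθ using hexists
  have hδ : Tendsto δ atTop (𝓝 0) := by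
    refine squeeze_zero_norm' ?_ (by
      simpa only [zero_mul, id] using
        (tendsto_id.const_div_atTop (4 + x ^ 2)).mul_const (x - 1 / 2))
    filter_upwards [eventually_ge_atTop 1] with t ht using (hδθ t ht).1
  have hθ : Tendsto θ atTop (𝓝 0) := by
    refine squeeze_zero_norm' ?_ (tendsto_id.const_div_atTop 1)
    filter_upwards [eventually_ge_atTop 1] with t ht using (hδθ t ht).2.1
  refine isEquivalent_iff_exists_eq_mul.2
    ⟨fun t => Real.exp (2 * δ t) * (1 + θ t), ?_, ?_⟩
  · simpa using ((hδ.const_mul 2).rexp).mul (hθ.const_add 1)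
  · filter_upwards [eventually_ge_atTop 1] with t ht
    rw [(hδθ t ht).2.2, Pi.mul_apply]
    ring

lemma isEquivalent_norm_log_pow_mul_zeta_sq {x : ℝ} (hx : 1 / 2 ≤ x) (l : ℕ) :
    (fun t : ℝ => ‖(Real.log (t / (2 * Real.pi)) : ℂ) ^ l *
      riemannZeta (1 - ((x : ℂ) - t * I))‖ ^ 2) ~[atTop]
      fun t => ‖riemannZeta ((x : ℂ) - t * I)‖ ^ 2 * momentWeight (2 * x - 1) (2 * l) t := by
  have hequiv := ((isEquivalent_norm_zetaFactor_sq hx).mul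
    (IsEquivalent.refl (u := fun t : ℝ => Real.log (t / (2 * Real.pi)) ^ (2 * l) *
      ‖riemannZeta ((x : ℂ) - t * I)‖ ^ 2)))
  refine (hequiv.congr_left ?_).congr_right (.of_forall fun t => ?_)
  · filter_upwards [eventually_gt_atTop 0] with t ht
    rw [riemannZeta_one_sub_line ht, norm_mul, norm_mul, norm_pow, norm_real, mul_pow, mul_pow,
      ← pow_mul, mul_comm l 2, pow_mul ‖_‖ 2, Real.norm_eq_abs, sq_abs, ← pow_mul, Pi.mul_apply]
    ring
  · simp only [Pi.mul_apply, momentWeight]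
    ring

lemma continuousOn_log_pow_mul_zeta (x : ℝ) (l : ℕ) :
    ContinuousOn (fun t : ℝ => (Real.log (t / (2 * Real.pi)) : ℂ) ^ l *
      riemannZeta (1 - ((x : ℂ) - t * I))) (Ioi 0) := by
  have hlog : ContinuousOn (fun t : ℝ => Real.log (t / (2 * Real.pi))) (Ioi 0) :=
    (continuousOn_id.div_const _).log fun t ht => (div_pos ht Real.two_pi_pos).ne'
  refine ((continuous_ofReal.comp_continuousOn hlog).pow l).mul fun t ht => ?_
  have hne : 1 - ((x : ℂ) - t * I) ≠ 1 := fun h => (ne_of_gt ht) (by simpa using congrArg im h)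
  exact ((differentiableAt_riemannZeta hne).continuousAt.comp
    (f := fun t : ℝ => 1 - ((x : ℂ) - t * I)) (by fun_prop)).continuousWithinAt

lemma tendsto_setIntegral_Ioc_div_of_le {f : ℝ → ℝ} {a b c : ℝ} (hab : a ≤ b)
    (hf : ContinuousOn f (Ici a))
    (hmean : Tendsto (fun T => (∫ t in Ioc a T, f t) / T) atTop (𝓝 c)) :
    Tendsto (fun T => (∫ t in Ioc b T, f t) / T) atTop (𝓝 c) := by
  have hlim := hmean.sub (tendsto_id.const_div_atTop (∫ t in Ioc a b, f t))
  rw [sub_zero] at hlim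
  refine hlim.congr' ?_
  filter_upwards [eventually_ge_atTop b] with T hT
  have hint := integrableOn_Ioc_of_continuousOn_Ici hf
  rw [← Ioc_union_Ioc_eq_Ioc hab hT, setIntegral_union (Ioc_disjoint_Ioc_of_le le_rfl)
    measurableSet_Ioc (hint b) ((hint T).mono_set (Ioc_subset_Ioc_left hab)), id, ← sub_div,
    add_sub_cancel_left]

lemma tendsto_setIntegral_norm_log_pow_mul_zeta_sq_div {x : ℝ} (hx : 1 / 2 < x) (l : ℕ) :
    Tendsto (fun T => (∫ t in Ioc logCutoff T, ‖(Real.log (t / (2 * Real.pi)) : ℂ) ^ l *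
      riemannZeta (1 - ((x : ℂ) - t * I))‖ ^ 2) / (T * momentWeight (2 * x - 1) (2 * l) T)) atTop
      (𝓝 ((riemannZeta ((2 * x : ℝ) : ℂ)).re / (2 * x))) := by
  have hp : 0 ≤ 2 * x - 1 := by linarith
  have hcutoff : Ici logCutoff ⊆ Ioi 0 := Ici_subset_Ioi.2 logCutoff_pos
  have hzeta_cont : ContinuousOn (fun t : ℝ => ‖riemannZeta ((x : ℂ) - t * I)‖ ^ 2) (Ioi 0) :=
    (continuousOn_zeta_line x).norm.pow 2
  have hmean := tendsto_setIntegral_Ioc_div_of_le (one_le_two.trans two_le_logCutoff)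
    (hzeta_cont.mono (Ici_subset_Ioi.2 zero_lt_one)) (tendsto_setIntegral_norm_zeta_sq_div hx)
  have hweighted := tendsto_setIntegral_mul_momentWeight_div hp (2 * l)
    (hzeta_cont.mono hcutoff) hmean
  rw [sub_add_cancel] at hweighted
  have htop : Tendsto (fun T => ∫ t in Ioc logCutoff T, ‖riemannZeta ((x : ℂ) - t * I)‖ ^ 2 *
      momentWeight (2 * x - 1) (2 * l) t) atTop atTop := by
    have hTw := tendsto_mul_momentWeight_atTop hp (2 * l)
    refine (hweighted.pos_mul_atTop
      (div_pos (re_riemannZeta_two_mul_pos hx) (by linarith)) hTw).congr' ?_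
    filter_upwards [hTw.eventually_gt_atTop 0] with T hT using div_mul_cancel₀ _ hT.ne'
  have hequiv := isEquivalent_setIntegral_Ioc
    (integrableOn_Ioc_of_continuousOn_Ici
      (((continuousOn_log_pow_mul_zeta x l).mono hcutoff).norm.pow 2))
    (integrableOn_Ioc_of_continuousOn_Ici
      ((hzeta_cont.mono hcutoff).mul (continuousOn_momentWeight _ (2 * l))))
    (fun t ht => mul_nonneg (sq_nonneg _) (momentWeight_pos _ _ (le_of_lt ht)).le)
    (isEquivalent_norm_log_pow_mul_zeta_sq hx.le l) htop
  exact (hequiv.div .refl).symm.tendsto_nhds hweighted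

/-! ### The second moment of the derivatives -/

lemma analyticAt_iteratedDeriv_riemannZeta (l : ℕ) {s : ℂ} (hs : s ≠ 1) :
    AnalyticAt ℂ (iteratedDeriv l riemannZeta) s := by
  have hzeta : AnalyticAt ℂ riemannZeta s := by
    rw [analyticAt_iff_eventually_differentiableAt]
    filter_upwards [isOpen_ne.mem_nhds hs] with z hz using differentiableAt_riemannZeta hz
  rw [iteratedDeriv_eq_iterate]
  exact hzeta.iterated_deriv l

lemma continuous_iteratedDeriv_riemannZeta_line {σ : ℝ} (hσ : σ ≠ 1) (l : ℕ) :
    Continuous fun t : ℝ => iteratedDeriv l riemannZeta ((σ : ℂ) + t * I) := by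
  refine continuous_iff_continuousAt.2 fun t => ?_
  have hne : (σ : ℂ) + t * I ≠ 1 := fun h => hσ (by simpa using congrArg re h)
  exact (analyticAt_iteratedDeriv_riemannZeta l hne).continuousAt.comp
    (f := fun t : ℝ => (σ : ℂ) + t * I) (by fun_prop)

lemma iteratedDeriv_riemannZeta_one_sub (l : ℕ) (σ t : ℝ) :
    iteratedDeriv l (fun w => riemannZeta (1 - w)) (((1 - σ : ℝ) : ℂ) - t * I) =
      (-1) ^ l * iteratedDeriv l riemannZeta ((σ : ℂ) + t * I) := by
  rw [iteratedDeriv_comp_const_sub]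
  simp only [smul_eq_mul]
  congr 2
  push_cast
  ring

lemma rpow_mul_log_sq_eq_mul_momentWeight (a : ℝ) (l : ℕ) {T : ℝ} (hT : logCutoff ≤ T) :
    T ^ (2 * a) * (Real.log (T / (2 * Real.pi)) ^ l / Real.log (T / (2 * Real.pi))) ^ 2 =
      (2 * Real.pi) ^ (2 * a - 1) * (Real.log (T / (2 * Real.pi)))⁻¹ ^ 2 *
        (T * momentWeight (2 * a - 1) (2 * l) T) := by
  have hT_pos := logCutoff_pos.trans_le hT
  have := Real.rpow_pos_of_pos Real.two_pi_pos (2 * a - 1)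
  have hsplit : T ^ (2 * a) = T ^ (2 * a - 1) * T := by
    rw [← Real.rpow_add_one hT_pos.ne', sub_add_cancel]
  rw [momentWeight, hsplit, Real.div_rpow hT_pos.le Real.two_pi_pos.le]
  field_simp
  ring

lemma eventually_setIntegral_norm_iteratedDeriv_zeta_sub_sq_le {a : ℝ} (ha : 1 / 2 < a) (l : ℕ)
    {ε : ℝ} (hε : 0 < ε) : ∀ᶠ T in atTop,
    ∫ t in Ioc logCutoff T, ‖iteratedDeriv l (fun w => riemannZeta (1 - w)) ((a : ℂ) - t * I) -
      (Real.log (t / (2 * Real.pi)) : ℂ) ^ l * riemannZeta (1 - ((a : ℂ) - t * I))‖ ^ 2 ≤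
        ε * (T * momentWeight (2 * a - 1) (2 * l) T) := by
  obtain ⟨C, -, hC⟩ := exists_setIntegral_norm_iteratedDeriv_zeta_sub_sq_le ha l
  have hsmall : Tendsto (fun T : ℝ => C * (2 * Real.pi) ^ (2 * a - 1) *
      (Real.log (T / (2 * Real.pi)))⁻¹ ^ 2) atTop (𝓝 0) := by
    simpa using (tendsto_log_div_two_pi.inv_tendsto_atTop.pow 2).const_mul
      (C * (2 * Real.pi) ^ (2 * a - 1))
  filter_upwards [hsmall.eventually_le_const hε, eventually_ge_atTop logCutoff] with T hle hT
  refine (hC T hT).trans ?_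
  rw [rpow_mul_log_sq_eq_mul_momentWeight a l hT, ← mul_assoc, ← mul_assoc C]
  exact mul_le_mul_of_nonneg_right hle
    (mul_pos (logCutoff_pos.trans_le hT) (momentWeight_pos _ _ hT)).le

lemma re_riemannZeta_two_sub_div_pos {σ : ℝ} (hσ : σ < 1 / 2) :
    0 < (riemannZeta ((2 - 2 * σ : ℝ) : ℂ)).re / (2 - 2 * σ) := by
  have hzeta := re_riemannZeta_two_mul_pos (x := 1 - σ) (by linarith)
  rw [mul_sub, mul_one] at hzeta
  exact div_pos hzeta (by linarith)

lemma tendsto_setIntegral_logCutoff_norm_iteratedDeriv_zeta_sq_div {σ : ℝ} (hσ : σ < 1 / 2)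
    (l : ℕ) :
    Tendsto (fun T => (∫ t in Ioc logCutoff T,
      ‖iteratedDeriv l riemannZeta ((σ : ℂ) + t * I)‖ ^ 2) /
        (T * momentWeight (1 - 2 * σ) (2 * l) T)) atTop
      (𝓝 ((riemannZeta ((2 - 2 * σ : ℝ) : ℂ)).re / (2 - 2 * σ))) := by
  have ha : 1 / 2 < 1 - σ := by linarith
  have hnorm (t : ℝ) : ‖iteratedDeriv l riemannZeta ((σ : ℂ) + t * I)‖ =
      ‖iteratedDeriv l (fun w => riemannZeta (1 - w)) (((1 - σ : ℝ) : ℂ) - t * I)‖ := by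
    rw [iteratedDeriv_riemannZeta_one_sub]
    simp only [norm_mul, norm_pow, norm_neg, norm_one, one_pow, one_mul]
  have hderiv_cont : Continuous fun t : ℝ =>
      iteratedDeriv l (fun w => riemannZeta (1 - w)) (((1 - σ : ℝ) : ℂ) - t * I) := by
    simp only [iteratedDeriv_riemannZeta_one_sub]
    exact continuous_const.mul (continuous_iteratedDeriv_riemannZeta_line (by linarith) l)
  have hleading := tendsto_setIntegral_norm_log_pow_mul_zeta_sq_div ha l
  have herror {ε : ℝ} (hε : 0 < ε) :=
    eventually_setIntegral_norm_iteratedDeriv_zeta_sub_sq_le ha l hε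
  have hexponent : 2 * (1 - σ) - 1 = 1 - 2 * σ := by ring
  have hdouble : 2 * (1 - σ) = 2 - 2 * σ := by ring
  simp only [hexponent] at hleading herror
  rw [hdouble] at hleading
  simp only [hnorm]
  refine tendsto_setIntegral_norm_sq_div_of_approx (re_riemannZeta_two_sub_div_pos hσ).le ?_
    hderiv_cont.continuousOn fun ε hε => ⟨_, _,
      (continuousOn_log_pow_mul_zeta (1 - σ) l).mono (Ici_subset_Ioi.2 logCutoff_pos),
      by rwa [sub_self, abs_zero], hleading, herror hε⟩
  filter_upwards [eventually_ge_atTop logCutoff] with T hT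
  exact mul_pos (logCutoff_pos.trans_le hT) (momentWeight_pos _ _ hT)

lemma setIntegral_Ioc_add_adjacent {f : ℝ → ℝ} (hf : Continuous f) {a b c : ℝ} (hab : a ≤ b)
    (hbc : b ≤ c) : (∫ t in Ioc a b, f t) + ∫ t in Ioc b c, f t = ∫ t in Ioc a c, f t := by
  rw [← Ioc_union_Ioc_eq_Ioc hab hbc, setIntegral_union (Ioc_disjoint_Ioc_of_le le_rfl)
    measurableSet_Ioc (hf.integrableOn_Ioc) hf.integrableOn_Ioc]

lemma tendsto_setIntegral_norm_iteratedDeriv_zeta_sq_div {σ : ℝ} (hσ : σ < 1 / 2) (l : ℕ) :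
    Tendsto (fun T : ℝ => (∫ t in Ioc 0 T, ‖iteratedDeriv l riemannZeta ((σ : ℂ) + t * I)‖ ^ 2) /
        (T * momentWeight (1 - 2 * σ) (2 * l) T)) atTop
      (𝓝 ((riemannZeta ((2 - 2 * σ : ℝ) : ℂ)).re / (2 - 2 * σ))) := by
  have hcont : Continuous fun t : ℝ => ‖iteratedDeriv l riemannZeta ((σ : ℂ) + t * I)‖ ^ 2 :=
    (continuous_iteratedDeriv_riemannZeta_line (by linarith) l).norm.pow 2
  have hhead := (tendsto_mul_momentWeight_atTop (p := 1 - 2 * σ) (by linarith)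
    (2 * l)).const_div_atTop
      (∫ t in Ioc 0 logCutoff, ‖iteratedDeriv l riemannZeta ((σ : ℂ) + t * I)‖ ^ 2)
  have hsum := hhead.add (tendsto_setIntegral_logCutoff_norm_iteratedDeriv_zeta_sq_div hσ l)
  rw [zero_add] at hsum
  refine hsum.congr' ?_
  filter_upwards [eventually_ge_atTop logCutoff] with T hT
  rw [← add_div, setIntegral_Ioc_add_adjacent hcont logCutoff_pos.le hT]

lemma tendsto_setIntegral_norm_iteratedDeriv_zeta_sq_div_mainTerm {σ : ℝ} (hσ : σ < 1 / 2)
    (l : ℕ) :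
    Tendsto (fun T : ℝ =>
      (∫ t in Ioc (0 : ℝ) T, ‖iteratedDeriv l riemannZeta ((σ : ℂ) + (t : ℂ) * I)‖ ^ 2) /
        ((2 * Real.pi) ^ (2 * σ - 1) * ((riemannZeta ((2 - 2 * σ : ℝ) : ℂ)).re / (2 - 2 * σ)) *
          T ^ (2 - 2 * σ) * Real.log (T / (2 * Real.pi)) ^ (2 * l))) atTop (𝓝 1) := by
  have hlim := tendsto_setIntegral_norm_iteratedDeriv_zeta_sq_div hσ l
  have hκ_pos := re_riemannZeta_two_sub_div_pos hσ
  set κ := (riemannZeta ((2 - 2 * σ : ℝ) : ℂ)).re / (2 - 2 * σ)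
  refine (div_self hκ_pos.ne' ▸ hlim.div_const κ).congr' ?_
  filter_upwards [eventually_gt_atTop 0] with T hT
  have hsplit : T ^ (2 - 2 * σ) = T * T ^ (1 - 2 * σ) := by
    rw [← Real.rpow_one_add' hT.le (by linarith)]
    ring_nf
  have hpi : (2 * Real.pi) ^ (2 * σ - 1) = ((2 * Real.pi) ^ (1 - 2 * σ))⁻¹ := by
    rw [← Real.rpow_neg Real.two_pi_pos.le, neg_sub]
  rw [div_div, momentWeight, Real.div_rpow hT.le Real.two_pi_pos.le, hsplit, hpi]
  congr 1
  ring

/-! ### Large values -/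

lemma exists_setIntegral_Ioc_le_mul {h : ℝ → ℝ} (hh : Continuous h) {a b : ℝ} (hab : a ≤ b) :
    ∃ t ∈ Icc a b, ∫ s in Ioc a b, h s ≤ (b - a) * h t := by
  obtain ⟨t, ht, hmax⟩ := isCompact_Icc.exists_isMaxOn (nonempty_Icc.2 hab) hh.continuousOn
  refine ⟨t, ht, ?_⟩
  calc ∫ s in Ioc a b, h s ≤ ∫ _ in Ioc a b, h t :=
        setIntegral_mono_on hh.integrableOn_Ioc (integrableOn_const measure_Ioc_lt_top.ne)
          measurableSet_Ioc fun s hs => hmax (Ioc_subset_Icc_self hs)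
    _ = (b - a) * h t := by simp [hab]

lemma eventually_exists_mul_le_of_tendsto_setIntegral {h w A c : ℝ → ℝ} {κ c₀ : ℝ}
    (hh : Continuous h) (hh_nonneg : ∀ t, 0 ≤ h t) (hw : ∀ᶠ T in atTop, 0 < w T)
    (hmean : Tendsto (fun T => (∫ t in Ioc 0 T, h t) / (T * w T)) atTop (𝓝 κ))
    (hA : Tendsto A atTop atTop) (hA_le : ∀ᶠ T in atTop, A T ≤ T)
    (hA_small : Tendsto (fun T => A T * w (A T) / (T * w T)) atTop (𝓝 0))
    (hc : Tendsto c atTop (𝓝 c₀)) (hc₀ : c₀ < κ) :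
    ∀ᶠ T in atTop, ∃ t ∈ Icc (A T) T, c T * w T ≤ h t := by
  have hhead : Tendsto (fun T => (∫ t in Ioc 0 (A T), h t) / (T * w T)) atTop (𝓝 0) := by
    refine (mul_zero κ ▸ (hmean.comp hA).mul hA_small).congr' ?_
    filter_upwards [hA.eventually hw, hA.eventually_gt_atTop 0] with T hwA hA_pos
    exact div_mul_div_cancel₀ (mul_pos hA_pos hwA).ne'
  have hlt := (add_zero c₀ ▸ hc.add hhead).eventually_lt hmean hc₀
  filter_upwards [hlt, hw, hA_le, hA.eventually_gt_atTop 0] with T hlt hwT hAT hA_pos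
  have hT_pos : 0 < T := hA_pos.trans_le hAT
  obtain ⟨t, ht, hle⟩ := exists_setIntegral_Ioc_le_mul hh hAT
  refine ⟨t, ht, ?_⟩
  rw [← lt_sub_iff_add_lt, ← sub_div, lt_div_iff₀ (mul_pos hT_pos hwT),
    ← setIntegral_Ioc_add_adjacent hh hA_pos.le hAT, add_sub_cancel_left] at hlt
  have hwide : (T - A T) * h t ≤ T * h t :=
    mul_le_mul_of_nonneg_right (by linarith) (hh_nonneg t)
  refine le_of_mul_le_mul_left ?_ hT_pos
  linarith

lemma momentWeight_le_momentWeight {p : ℝ} (hp : 0 ≤ p) (n : ℕ) {s t : ℝ} (hs : logCutoff ≤ s)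
    (hst : s ≤ t) : momentWeight p n s ≤ momentWeight p n t := by
  have hs_pos := logCutoff_pos.trans_le hs
  have ht_pos := hs_pos.trans_le hst
  have := Real.pi_pos
  have := zero_lt_one.trans_le (one_le_log_div_two_pi hs)
  unfold momentWeight
  gcongr

lemma tendsto_rpow_mul_momentWeight_div {p β : ℝ} (hp : 0 ≤ p) (n : ℕ) (hβ_pos : 0 < β)
    (hβ : β < 1) :
    Tendsto (fun T : ℝ => T ^ β * momentWeight p n (T ^ β) / (T * momentWeight p n T)) atTop
      (𝓝 0) := by
  have hbase := (tendsto_rpow_atTop hβ_pos).eventually_ge_atTop logCutoff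
  refine squeeze_zero' ?_ ?_ (tendsto_rpow_neg_atTop (sub_pos.2 hβ))
  · filter_upwards [hbase, eventually_ge_atTop logCutoff] with T hTβ hT
    have := logCutoff_pos.trans_le hT
    have := momentWeight_pos p n hT
    have := momentWeight_pos p n hTβ
    positivity
  · filter_upwards [hbase, eventually_ge_atTop logCutoff, eventually_ge_atTop 1] with T hTβ hT hT₁
    have hT_pos := logCutoff_pos.trans_le hT
    have hweight_pos := momentWeight_pos p n hT
    have hmono := momentWeight_le_momentWeight hp n hTβ (Real.rpow_le_self_of_one_le hT₁ hβ.le)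
    rw [neg_sub, Real.rpow_sub_one hT_pos.ne', mul_div_mul_comm]
    exact mul_le_of_le_one_right (by positivity) ((div_le_one hweight_pos).2 hmono)

lemma tendsto_log_div_log_div_two_pi :
    Tendsto (fun T : ℝ => Real.log T / Real.log (T / (2 * Real.pi))) atTop (𝓝 1) := by
  refine (add_zero (1 : ℝ) ▸ (tendsto_log_div_two_pi.const_div_atTop
    (Real.log (2 * Real.pi))).const_add 1).congr' ?_
  filter_upwards [tendsto_log_div_two_pi.eventually_gt_atTop 0, eventually_gt_atTop 0]
    with T hlog hT
  have hsplit : Real.log T = Real.log (T / (2 * Real.pi)) + Real.log (2 * Real.pi) := by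
    rw [Real.log_div hT.ne' Real.two_pi_pos.ne', sub_add_cancel]
  rw [hsplit, add_div, div_self hlog.ne']

lemma sq_lowerBound_eq_mul_momentWeight {κ : ℝ} (hκ : 0 ≤ κ) (r σ : ℝ) (l : ℕ) {T : ℝ}
    (hT : logCutoff ≤ T) :
    (r * (2 * Real.pi) ^ (σ - 1 / 2) * √κ * T ^ (1 / 2 - σ) * Real.log T ^ l) ^ 2 =
      r ^ 2 * κ * (Real.log T / Real.log (T / (2 * Real.pi))) ^ (2 * l) *
        momentWeight (1 - 2 * σ) (2 * l) T := by
  have hT_pos := logCutoff_pos.trans_le hT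
  have hlog_pos := zero_lt_one.trans_le (one_le_log_div_two_pi hT)
  have hsq {b : ℝ} (hb : 0 < b) : (b ^ (1 / 2 - σ)) ^ 2 = b ^ (1 - 2 * σ) := by
    rw [← Real.rpow_mul_natCast hb.le]
    ring_nf
  have hpi : (2 * Real.pi) ^ (σ - 1 / 2) = ((2 * Real.pi) ^ (1 / 2 - σ))⁻¹ := by
    rw [← Real.rpow_neg Real.two_pi_pos.le, neg_sub]
  rw [momentWeight, Real.div_rpow hT_pos.le Real.two_pi_pos.le, hpi]
  simp only [mul_pow, inv_pow, hsq hT_pos, hsq Real.two_pi_pos, Real.sq_sqrt hκ, div_pow,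
    ← pow_mul, mul_comm l 2]
  field_simp

lemma eventually_exists_le_norm_iteratedDeriv_zeta {σ : ℝ} (hσ : σ < 1 / 2) (l : ℕ) {β ε : ℝ}
    (hβ_pos : 0 < β) (hβ : β < 1) (hε : 0 < ε) (hε' : ε ≤ 1) : ∀ᶠ T : ℝ in atTop,
    ∃ t ∈ Icc (T ^ β) T, (1 - ε) * (2 * Real.pi) ^ (σ - 1 / 2) *
      √((riemannZeta ((2 - 2 * σ : ℝ) : ℂ)).re / (2 - 2 * σ)) * T ^ (1 / 2 - σ) * Real.log T ^ l ≤
        ‖iteratedDeriv l riemannZeta ((σ : ℂ) + (t : ℂ) * I)‖ := by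
  have hκ_pos := re_riemannZeta_two_sub_div_pos hσ
  have hmean := tendsto_setIntegral_norm_iteratedDeriv_zeta_sq_div hσ l
  set κ := (riemannZeta ((2 - 2 * σ : ℝ) : ℂ)).re / (2 - 2 * σ)
  have hcoeff : Tendsto (fun T : ℝ => (1 - ε) ^ 2 * κ *
      (Real.log T / Real.log (T / (2 * Real.pi))) ^ (2 * l)) atTop (𝓝 ((1 - ε) ^ 2 * κ)) := by
    simpa using (tendsto_log_div_log_div_two_pi.pow (2 * l)).const_mul ((1 - ε) ^ 2 * κ)
  have hlt : (1 - ε) ^ 2 * κ < κ := mul_lt_of_lt_one_left hκ_pos (by nlinarith)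
  have hlarge := eventually_exists_mul_le_of_tendsto_setIntegral
    ((continuous_iteratedDeriv_riemannZeta_line (by linarith) l).norm.pow 2)
    (fun t => sq_nonneg _)
    ((eventually_ge_atTop logCutoff).mono fun T hT => momentWeight_pos _ _ hT) hmean
    (tendsto_rpow_atTop hβ_pos)
    ((eventually_ge_atTop 1).mono fun T hT => Real.rpow_le_self_of_one_le hT hβ.le)
    (tendsto_rpow_mul_momentWeight_div (by linarith) (2 * l) hβ_pos hβ) hcoeff hlt
  filter_upwards [hlarge, eventually_ge_atTop logCutoff] with T ⟨t, ht, hle⟩ hT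
  rw [← sq_lowerBound_eq_mul_momentWeight hκ_pos.le (1 - ε) σ l hT] at hle
  exact ⟨t, ht, le_of_abs_le (abs_le_of_sq_le_sq hle (norm_nonneg _))⟩

end

theorem second_moment_and_max_deriv_zeta_left_general (ℓ : ℕ) (σ : ℝ) (hσ : σ < 1 / 2) :
    Filter.Tendsto
      (fun T : ℝ =>
        (∫ t in Set.Ioc (0 : ℝ) T,
            ‖iteratedDeriv ℓ riemannZeta ((σ : ℂ) + (t : ℂ) * Complex.I)‖ ^ 2) /
          ((2 * Real.pi) ^ (2 * σ - 1) *
            ((riemannZeta ((2 - 2 * σ : ℝ) : ℂ)).re / (2 - 2 * σ)) *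
            T ^ (2 - 2 * σ) * (Real.log (T / (2 * Real.pi))) ^ (2 * ℓ)))
      Filter.atTop (nhds 1) ∧
    ∀ β : ℝ, β < 1 → ∀ ε : ℝ, 0 < ε → ∃ T₀ : ℝ, ∀ T : ℝ, T₀ ≤ T →
      ∃ t ∈ Set.Icc (T ^ β) T,
        (1 - ε) * (2 * Real.pi) ^ (σ - 1 / 2) *
            Real.sqrt ((riemannZeta ((2 - 2 * σ : ℝ) : ℂ)).re / (2 - 2 * σ)) *
            T ^ (1 / 2 - σ) * (Real.log T) ^ ℓ ≤
          ‖iteratedDeriv ℓ riemannZeta ((σ : ℂ) + (t : ℂ) * Complex.I)‖ := by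
  refine ⟨tendsto_setIntegral_norm_iteratedDeriv_zeta_sq_div_mainTerm hσ ℓ, fun β hβ ε hε => ?_⟩
  obtain ⟨T₀, hT₀⟩ := eventually_atTop.1 ((eventually_exists_le_norm_iteratedDeriv_zeta hσ ℓ
    (lt_max_of_lt_right one_half_pos) (max_lt hβ one_half_lt_one) (lt_min hε one_pos)
    (min_le_right ε 1)).and (eventually_ge_atTop 1))
  refine ⟨T₀, fun T hT => ?_⟩
  obtain ⟨⟨t, ht, hle⟩, hT_one⟩ := hT₀ T hT
  have hexponent : T ^ β ≤ T ^ max β (1 / 2) :=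
    Real.rpow_le_rpow_of_exponent_le hT_one (le_max_left _ _)
  refine ⟨t, ⟨hexponent.trans ht.1, ht.2⟩, le_trans ?_ hle⟩
  have := Real.log_nonneg hT_one
  gcongr
  exact min_le_left _ _

theorem second_moment_and_max_deriv_zeta_left (ℓ : ℕ) (hℓ : 1 ≤ ℓ) (σ : ℝ)
    (hσ : σ < 1 / 2) :
    Filter.Tendsto
      (fun T : ℝ =>
        (∫ t in Set.Ioc (0 : ℝ) T,
            ‖iteratedDeriv ℓ riemannZeta ((σ : ℂ) + (t : ℂ) * Complex.I)‖ ^ 2) /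
          ((2 * Real.pi) ^ (2 * σ - 1) *
            ((riemannZeta ((2 - 2 * σ : ℝ) : ℂ)).re / (2 - 2 * σ)) *
            T ^ (2 - 2 * σ) * (Real.log (T / (2 * Real.pi))) ^ (2 * ℓ)))
      Filter.atTop (nhds 1) ∧
    ∀ β : ℝ, β ∈ Set.Ico (0 : ℝ) 1 → ∀ ε : ℝ, 0 < ε → ∃ T₀ : ℝ, ∀ T : ℝ, T₀ ≤ T →
      ∃ t ∈ Set.Icc (T ^ β) T,
        (1 - ε) * (2 * Real.pi) ^ (σ - 1 / 2) *
            Real.sqrt ((riemannZeta ((2 - 2 * σ : ℝ) : ℂ)).re / (2 - 2 * σ)) *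
            T ^ (1 / 2 - σ) * (Real.log T) ^ ℓ ≤
          ‖iteratedDeriv ℓ riemannZeta ((σ : ℂ) + (t : ℂ) * Complex.I)‖ :=
  (second_moment_and_max_deriv_zeta_left_general ℓ σ hσ).imp_right
    fun hmax β hβ => hmax β hβ.2
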